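/- arXiv:1410.0504 — 2 statements merged into one kernel-verified Lean document; each statement's English description precedes it below -/
import Mathlib

section
/- Let K be a convex, bounded, open subset of ℝ² with C² boundary. Then the anisotropic total curvature of ∂K satisfies the anisotropic Gauss–Bonnet formula ∫_{∂K} k_H(x) H(ν(x)) dℋ¹(x) = 2κ, where ν is the Euclidean outer unit normal to ∂K, k_H is the anisotropic curvature of ∂K, and κ is the Lebesgue measure of the Wulff shape of H. -/
open MeasureTheory Set
open scoped ENNReal NNReal RealInnerProductSpace

noncomputable section

/-- The plane `ℝ²`. -/
abbrev E2 : Type := EuclideanSpace ℝ (Fin 2)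

/-- The `i`-th partial derivative of `f` at `x`. -/
def pd (f : E2 → ℝ) (i : Fin 2) (x : E2) : ℝ :=
  fderiv ℝ f x (EuclideanSpace.single i 1)

/-- The Hessian matrix of `f` at `x`. -/
def hessian (f : E2 → ℝ) (x : E2) : Matrix (Fin 2) (Fin 2) ℝ :=
  Matrix.of fun i j => pd (pd f j) i x

/-- The hypotheses on the anisotropy `H`: a convex, coercive, positively `1`-homogeneous even
function, with `H²` strongly convex and `C²` away from the origin. -/
structure IsAnisoNorm (H : E2 → ℝ) : Prop where
  nonneg : ∀ ξ, 0 ≤ H ξ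
  convex : ConvexOn ℝ Set.univ H
  coercive : ∃ α > 0, ∀ ξ, α * ‖ξ‖ ≤ H ξ
  homog : ∀ (t : ℝ) (ξ : E2), H (t • ξ) = |t| * H ξ
  smooth : ContDiffOn ℝ 2 H {(0 : E2)}ᶜ
  posdef : ∀ ξ : E2, ξ ≠ 0 → ∀ v : E2, v ≠ 0 →
      0 < ∑ i, ∑ j, hessian (fun z => H z ^ 2) ξ i j * v i * v j

/-- The polar function `H^o(v) = sup_{ξ ≠ 0} (ξ·v)/H(ξ)`. -/
def polar (H : E2 → ℝ) (v : E2) : ℝ :=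
  ⨆ ξ : {ξ : E2 // ξ ≠ 0}, ⟪(ξ : E2), v⟫ / H ξ

/-- The Wulff shape `𝒲 = {H^o < 1}`. -/
def Wulff (H : E2 → ℝ) : Set E2 := {ξ | polar H ξ < 1}

/-- The scaled Wulff shape `𝒲_R = {H^o < R}`. -/
def wulffR (H : E2 → ℝ) (R : ℝ) : Set E2 := {ξ | polar H ξ < R}

/-- `κ`, the Lebesgue measure of the Wulff shape. -/
def kappa (H : E2 → ℝ) : ℝ := (volume (Wulff H)).toReal

/-- `F(ξ) = H(ξ)²/2`. -/
def Fani (H : E2 → ℝ) (ξ : E2) : ℝ := H ξ ^ 2 / 2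

/-- The matrix `A[u] = ∇²_ξ F(∇u) · ∇²u`. -/
def Amat (H u : E2 → ℝ) (x : E2) : Matrix (Fin 2) (Fin 2) ℝ :=
  hessian (Fani H) (gradient u x) * hessian u x

/-- The anisotropic Monge–Ampère operator `det_H[u] = det ∇²_ξF(∇u) · det ∇²u`. -/
def detH (H u : E2 → ℝ) (x : E2) : ℝ :=
  (hessian (Fani H) (gradient u x)).det * (hessian u x).det

/-- The cofactor matrix of a `2×2` matrix. -/
def cof (B : Matrix (Fin 2) (Fin 2) ℝ) : Matrix (Fin 2) (Fin 2) ℝ :=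
  Matrix.of ![![B 1 1, -B 1 0], ![-B 0 1, B 0 0]]

/-- The anisotropic curvature of the level line of `u` through `x`:
`k_H(x) = -Σ_{i,j} H_{ξ_iξ_j}(∇u) u_{ij}`. -/
def kH (H u : E2 → ℝ) (x : E2) : ℝ :=
  -∑ i, ∑ j, hessian H (gradient u x) i j * hessian u x i j

/-- The class `Φ₀(Ω)`: `W^{2,2}(Ω) ∩ C¹(Ω̄)` functions vanishing on `∂Ω`, concave in `Ω`. -/
structure MemPhi0 (Ω : Set E2) (u : E2 → ℝ) : Prop where
  sobolev : ∀ i j, MemLp (fun x => hessian u x i j) 2 (volume.restrict Ω)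
  c1 : ContDiffOn ℝ 1 u (closure Ω)
  bzero : ∀ x ∈ frontier Ω, u x = 0
  concave : ConcaveOn ℝ Ω u

/-- `max_{Ω̄} u`. -/
def maxcl (Ω : Set E2) (u : E2 → ℝ) : ℝ := sSup (u '' closure Ω)

/-- The set `E_u = {x ∈ Ω : 0 ≤ u(x) < max_{Ω̄} u}`. -/
def Eu (Ω : Set E2) (u : E2 → ℝ) : Set E2 :=
  {x ∈ Ω | 0 ≤ u x ∧ u x < maxcl Ω u}

/-- `K` has `C²` boundary: it admits a global `C²` defining function with nonvanishing
gradient on the boundary. -/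
def HasC2Boundary (K : Set E2) : Prop :=
  ∃ φ : E2 → ℝ, ContDiff ℝ 2 φ ∧ K = {x | φ x < 0} ∧
    frontier K = {x | φ x = 0} ∧ ∀ x ∈ frontier K, gradient φ x ≠ 0

/-- `K` has `C¹` boundary. -/
def HasC1Boundary (K : Set E2) : Prop :=
  ∃ φ : E2 → ℝ, ContDiff ℝ 1 φ ∧ K = {x | φ x < 0} ∧
    frontier K = {x | φ x = 0} ∧ ∀ x ∈ frontier K, gradient φ x ≠ 0

/-- The Euclidean outer unit normal `ν = -∇u/|∇u|` to a superlevel set of `u`. -/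
def nuLevel (u : E2 → ℝ) (x : E2) : E2 := -(‖gradient u x‖⁻¹ • gradient u x)

/-- The level set `Σ_t = {u = t}` (in `Ω̄`). -/
def levelSet (Ω : Set E2) (u : E2 → ℝ) (t : ℝ) : Set E2 :=
  {x ∈ closure Ω | u x = t}

/-- The superlevel set `Ω_t = {u > t}`. -/
def superLevel (Ω : Set E2) (u : E2 → ℝ) (t : ℝ) : Set E2 :=
  {x ∈ Ω | t < u x}

/-- `λ_H(t) = P_H({u > t}) = ∫_{{u = t}} H(ν) dℋ¹`. -/
def lambdaH (H : E2 → ℝ) (Ω : Set E2) (u : E2 → ℝ) (t : ℝ) : ℝ :=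
  ∫ x in levelSet Ω u t, H (nuLevel u x) ∂(μH[1] : Measure E2)

/-- The anisotropic perimeter `P_H(Ω) = λ_H(0)` of `Ω = {u > 0}`. -/
def PerH (H : E2 → ℝ) (Ω : Set E2) (u : E2 → ℝ) : ℝ := lambdaH H Ω u 0

/-- The rearrangement `u^♦(s) = sup{t ≥ 0 : λ_H(t) ≥ s}` of `u` with respect to the
anisotropic perimeter. -/
def diamondRe (H : E2 → ℝ) (Ω : Set E2) (u : E2 → ℝ) (s : ℝ) : ℝ :=
  sSup {t : ℝ | 0 ≤ t ∧ s ≤ lambdaH H Ω u t}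

/-- The anisotropic radial symmetrand `u^★(x) = u^♦(2κ H^o(x))`. -/
def starRe (H : E2 → ℝ) (Ω : Set E2) (u : E2 → ℝ) (x : E2) : ℝ :=
  diamondRe H Ω u (2 * kappa H * polar H x)

/-- `Ω^★ = 𝒲_R` with `R = P_H(Ω)/(2κ)`. -/
def OmegaStar (H : E2 → ℝ) (Ω : Set E2) (u : E2 → ℝ) : Set E2 :=
  wulffR H (PerH H Ω u / (2 * kappa H))

/-- The distribution function `μ(t) = |{x ∈ Ω : |f(x)| > t}|`. -/
def distrib (Ω : Set E2) (f : E2 → ℝ) (t : ℝ) : ℝ :=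
  (volume {x ∈ Ω | t < |f x|}).toReal

/-- The decreasing rearrangement `f*(s) = sup{t : μ(t) > s}`. -/
def decRe (Ω : Set E2) (f : E2 → ℝ) (s : ℝ) : ℝ :=
  sSup {t : ℝ | s < distrib Ω f t}

/-!
Seen from a point `x₀` of `K`, every ray meets `∂K` once and transversally, so `∂K` is a closed
curve `γ t = x₀ + r t • unitVec t`. Along it the integrand is `F (n t) dθ`, where `n = ∇φ ∘ γ` is
the outer normal, `θ` its polar angle and `F = H · tr ∇²H` is `0`-homogeneous. As
`⟪n t, unitVec t⟫ > 0`, the normal turns exactly once around the origin and the integral equals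
`∫ F (unitVec t) dt`, which no longer depends on `K`. The same change of angle along
`∇H ∘ unitVec`, which traces the boundary `{H^o = 1}` of the Wulff shape with velocity
`tr ∇²H (unitVec t) • rot (unitVec t)`, identifies that number with `∫ (H^o (unitVec t))⁻² dt`,
twice the area of the Wulff shape in polar coordinates.
-/

section ArcLength

open Filter Topology

theorem edist_le_hausdorffMeasure_image_Ioc {X : Type*} [MetricSpace X] [MeasurableSpace X]
    [BorelSpace X] {γ : ℝ → X} {a b : ℝ} (hab : a ≤ b) (hγ : ContinuousOn γ (Icc a b)) :
    edist (γ a) (γ b) ≤ μH[1] (γ '' Ioc a b) := by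
  have h_ivt : Ioc (dist (γ a) (γ a)) (dist (γ b) (γ a)) ⊆ (dist · (γ a)) '' (γ '' Ioc a b) := by
    rw [image_image]
    exact intermediate_value_Ioc hab
      ((LipschitzWith.dist_left (γ a)).continuous.comp_continuousOn hγ)
  calc edist (γ a) (γ b)
      = μH[1] (Ioc (dist (γ a) (γ a)) (dist (γ b) (γ a))) := by
        rw [hausdorffMeasure_real, Real.volume_Ioc, dist_self, sub_zero, dist_comm, edist_dist]
    _ ≤ μH[1] ((dist · (γ a)) '' (γ '' Ioc a b)) := measure_mono h_ivt
    _ ≤ μH[1] (γ '' Ioc a b) := by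
        simpa using (LipschitzWith.dist_left (γ a)).hausdorffMeasure_image_le
          zero_le_one (γ '' Ioc a b)

theorem hausdorffMeasure_image_Ioc_le {X : Type*} [EMetricSpace X] [MeasurableSpace X]
    [BorelSpace X] {γ : ℝ → X} {a b : ℝ} {C : ℝ≥0} (hγ : LipschitzOnWith C γ (Ioc a b)) :
    μH[1] (γ '' Ioc a b) ≤ C * ENNReal.ofReal (b - a) := by
  simpa [hausdorffMeasure_real] using hγ.hausdorffMeasure_image_le zero_le_one

theorem hausdorffMeasure_image_Ioc_toReal_le {X : Type*} [EMetricSpace X] [MeasurableSpace X]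
    [BorelSpace X] {γ : ℝ → X} {a b : ℝ} {C : ℝ≥0} (hab : a ≤ b)
    (hγ : LipschitzOnWith C γ (Ioc a b)) :
    (μH[1] (γ '' Ioc a b)).toReal ≤ C * (b - a) := by
  refine ENNReal.toReal_le_of_le_ofReal (mul_nonneg C.coe_nonneg (sub_nonneg.2 hab)) ?_
  rw [ENNReal.ofReal_mul C.coe_nonneg, ENNReal.ofReal_coe_nnreal]
  exact hausdorffMeasure_image_Ioc_le hγ

theorem hausdorffMeasure_image_Ioc_ne_top {X : Type*} [EMetricSpace X] [MeasurableSpace X]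
    [BorelSpace X] {γ : ℝ → X} {a b : ℝ} {C : ℝ≥0} (hγ : LipschitzOnWith C γ (Ioc a b)) :
    μH[1] (γ '' Ioc a b) ≠ ∞ :=
  ((hausdorffMeasure_image_Ioc_le hγ).trans_lt
    (ENNReal.mul_lt_top ENNReal.coe_lt_top ENNReal.ofReal_lt_top)).ne

theorem lipschitzOnWith_hausdorffMeasure_image_Ioc {X : Type*} [EMetricSpace X]
    [MeasurableSpace X] [BorelSpace X] {γ : ℝ → X} {a b : ℝ} {C : ℝ≥0}
    (hγ : LipschitzOnWith C γ (Ioc a b)) :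
    LipschitzOnWith C (fun t => (μH[1] (γ '' Ioc a t)).toReal) (Icc a b) := by
  refine LipschitzOnWith.of_le_add_mul _ fun t ht s hs => ?_
  have h_finite : ∀ u ∈ Icc a b, μH[1] (γ '' Ioc a u) ≠ ∞ := fun u hu =>
    hausdorffMeasure_image_Ioc_ne_top (hγ.mono (Ioc_subset_Ioc_right hu.2))
  rcases le_total t s with hts | hst
  · refine le_add_of_le_of_nonneg (ENNReal.toReal_mono (h_finite s hs) ?_) (by positivity)
    exact measure_mono (image_mono (Ioc_subset_Ioc_right hts))
  · have h_lip := hγ.mono (Ioc_subset_Ioc hs.1 ht.2)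
    calc (μH[1] (γ '' Ioc a t)).toReal
        = (μH[1] (γ '' Ioc a s ∪ γ '' Ioc s t)).toReal := by
          rw [← image_union, Ioc_union_Ioc_eq_Ioc hs.1 hst]
      _ ≤ (μH[1] (γ '' Ioc a s)).toReal + (μH[1] (γ '' Ioc s t)).toReal :=
          (ENNReal.toReal_mono (ENNReal.add_ne_top.2 ⟨h_finite s hs,
            hausdorffMeasure_image_Ioc_ne_top h_lip⟩) (measure_union_le _ _)).trans
            ENNReal.toReal_add_le
      _ ≤ (μH[1] (γ '' Ioc a s)).toReal + C * dist t s := by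
          rw [Real.dist_eq, abs_of_nonneg (sub_nonneg.2 hst)]
          gcongr
          exact hausdorffMeasure_image_Ioc_toReal_le hst h_lip

theorem hausdorffMeasure_image_Ioc_toReal_add {X : Type*} [MetricSpace X] [MeasurableSpace X]
    [BorelSpace X] {γ : ℝ → X} {a b c : ℝ} {C : ℝ≥0} (hab : a ≤ b)
    (hbc : b ≤ c) (hγ : LipschitzOnWith C γ (Ioc a c)) (hinj : InjOn γ (Ioc a c)) :
    (μH[1] (γ '' Ioc a c)).toReal =
      (μH[1] (γ '' Ioc a b)).toReal + (μH[1] (γ '' Ioc b c)).toReal := by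
  have h_left : Ioc a b ⊆ Ioc a c := Ioc_subset_Ioc_right hbc
  have h_right : Ioc b c ⊆ Ioc a c := Ioc_subset_Ioc_left hab
  have h_meas : MeasurableSet (γ '' Ioc b c) :=
    measurableSet_Ioc.image_of_continuousOn_injOn (hγ.mono h_right).continuousOn
      (hinj.mono h_right)
  rw [← Ioc_union_Ioc_eq_Ioc hab hbc, image_union,
    measure_union ((Ioc_disjoint_Ioc_of_le le_rfl).image hinj h_left h_right) h_meas,
    ENNReal.toReal_add (hausdorffMeasure_image_Ioc_ne_top (hγ.mono h_left))
      (hausdorffMeasure_image_Ioc_ne_top (hγ.mono h_right))]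

variable {E : Type*} [NormedAddCommGroup E] [NormedSpace ℝ E] [MeasurableSpace E] [BorelSpace E]

theorem tendsto_hausdorffMeasure_image_Ioc_div {γ : ℝ → E} {γ' : E} {t : ℝ}
    (hγ : HasStrictDerivAt γ γ' t) :
    Tendsto (fun u => (μH[1] (γ '' Ioc t u)).toReal / (u - t)) (𝓝[>] t) (𝓝 ‖γ'‖) := by
  have h_lipschitz : ∀ C : ℝ≥0, ‖γ'‖₊ < C → ∀ᶠ u in 𝓝[>] t, LipschitzOnWith C γ (Icc t u) := by
    intro C hC
    obtain ⟨s, hs, hlip⟩ := hγ.hasStrictFDerivAt.exists_lipschitzOnWith_of_nnnorm_lt C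
      (by simpa [← NNReal.coe_lt_coe] using hC)
    obtain ⟨v, htv, hvs⟩ := mem_nhdsGE_iff_exists_Icc_subset.1 (mem_nhdsWithin_of_mem_nhds hs)
    filter_upwards [Ioc_mem_nhdsGT htv] with u hu
    exact hlip.mono ((Icc_subset_Icc_right hu.2).trans hvs)
  refine tendsto_order.2 ⟨fun c hc => ?_, fun c hc => ?_⟩
  · have h_slope := (hasDerivAt_iff_tendsto_slope.1 hγ.hasDerivAt).norm.mono_left
      (nhdsWithin_mono t fun u (hu : t < u) => hu.ne')
    obtain ⟨C, hC⟩ := exists_gt ‖γ'‖₊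
    filter_upwards [h_slope.eventually (lt_mem_nhds hc), h_lipschitz C hC, self_mem_nhdsWithin]
      with u h_slope h_lip (htu : t < u)
    refine h_slope.trans_le ?_
    rw [slope_def_module, norm_smul, norm_inv, Real.norm_of_nonneg (sub_nonneg.2 htu.le),
      inv_mul_eq_div]
    refine div_le_div_of_nonneg_right ?_ (sub_nonneg.2 htu.le)
    rw [← dist_eq_norm, dist_comm, dist_edist]
    exact ENNReal.toReal_mono
      (hausdorffMeasure_image_Ioc_ne_top (h_lip.mono Ioc_subset_Icc_self))
      (edist_le_hausdorffMeasure_image_Ioc htu.le h_lip.continuousOn)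
  · obtain ⟨C, hC, hCc⟩ := exists_between hc
    lift C to ℝ≥0 using (norm_nonneg _).trans hC.le
    filter_upwards [h_lipschitz C hC, self_mem_nhdsWithin] with u h_lip (htu : t < u)
    refine lt_of_le_of_lt ?_ hCc
    rw [div_le_iff₀ (sub_pos.2 htu)]
    exact hausdorffMeasure_image_Ioc_toReal_le htu.le (h_lip.mono Ioc_subset_Icc_self)

theorem hausdorffMeasure_image_Ioc_eq_integral {γ : ℝ → E} {a b : ℝ} (hab : a ≤ b)
    (hγ : ContDiff ℝ 1 γ) (hinj : InjOn γ (Ioc a b)) :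
    μH[1] (γ '' Ioc a b) = ENNReal.ofReal (∫ t in a..b, ‖deriv γ t‖) := by
  obtain ⟨C, hC⟩ := hγ.contDiffOn.exists_lipschitzOnWith one_ne_zero (convex_Icc a b) isCompact_Icc
  replace hC := hC.mono Ioc_subset_Icc_self
  have h_right_deriv : ∀ t ∈ Ioo a b, HasDerivWithinAt
      (fun u => (μH[1] (γ '' Ioc a u)).toReal) ‖deriv γ t‖ (Ioi t) t := by
    intro t ht
    rw [hasDerivWithinAt_iff_tendsto_slope' self_notMem_Ioi]
    refine (tendsto_hausdorffMeasure_image_Ioc_div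
      (hγ.contDiffAt.hasStrictDerivAt one_ne_zero)).congr' ?_
    filter_upwards [Ioo_mem_nhdsGT ht.2] with u hu
    rw [slope_def_field, hausdorffMeasure_image_Ioc_toReal_add ht.1.le hu.1.le
      (hC.mono (Ioc_subset_Ioc_right hu.2.le)) (hinj.mono (Ioc_subset_Ioc_right hu.2.le)),
      add_sub_cancel_left]
  have h_ftc := intervalIntegral.integral_eq_sub_of_hasDeriv_right_of_le hab
    (lipschitzOnWith_hausdorffMeasure_image_Ioc hC).continuousOn h_right_deriv
    ((hγ.continuous_deriv le_rfl).norm.intervalIntegrable _ _)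
  rw [h_ftc, Ioc_self, image_empty, measure_empty, ENNReal.toReal_zero, sub_zero,
    ENNReal.ofReal_toReal (hausdorffMeasure_image_Ioc_ne_top hC)]

theorem map_comap_domRestrict_hausdorffMeasure {γ : ℝ → E} {a b : ℝ}
    (hγ : ContDiff ℝ 1 γ) (hinj : InjOn γ (Ioc a b)) :
    ((μH[1] : Measure E).comap ((Ioc a b).domRestrict γ)).map (↑) =
      (volume.restrict (Ioc a b)).withDensity fun t => ‖deriv γ t‖ₑ := by
  have h_emb := ContinuousOn.measurableEmbedding measurableSet_Ioc hγ.continuous.continuousOn hinj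
  have h_left : ∀ u v, ((μH[1] : Measure E).comap ((Ioc a b).domRestrict γ)).map (↑) (Ioc u v) =
      μH[1] (γ '' (Ioc u v ∩ Ioc a b)) := by
    intro u v
    rw [Measure.map_apply measurable_subtype_coe measurableSet_Ioc, h_emb.comap_apply,
      domRestrict_eq, image_comp, Subtype.image_preimage_coe, inter_comm]
  have h_length : ∀ u v, u ≤ v → Ioc u v ⊆ Ioc a b →
      μH[1] (γ '' Ioc u v) = ∫⁻ t in Ioc u v, ‖deriv γ t‖ₑ := by
    intro u v huv hsub
    rw [hausdorffMeasure_image_Ioc_eq_integral huv hγ (hinj.mono hsub),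
      intervalIntegral.integral_of_le huv, ofReal_integral_norm_eq_lintegral_enorm]
    exact ((hγ.continuous_deriv le_rfl).integrableOn_Icc).mono_set Ioc_subset_Icc_self
  have h_agree : ∀ u v, μH[1] (γ '' (Ioc u v ∩ Ioc a b)) =
      ∫⁻ t in Ioc u v ∩ Ioc a b, ‖deriv γ t‖ₑ := by
    intro u v
    rw [Ioc_inter_Ioc]
    rcases le_total (max u a) (min v b) with h | h
    · exact h_length _ _ h (Ioc_subset_Ioc (le_max_right _ _) (min_le_right _ _))
    · simp [Ioc_eq_empty_of_le h]
  refine Measure.ext_of_Ioc' _ _ (fun u v _ => ?_) fun u v _ => ?_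
  · obtain ⟨C, hC⟩ := hγ.contDiffOn.exists_lipschitzOnWith one_ne_zero
      (convex_Icc a b) isCompact_Icc
    rw [h_left]
    exact measure_ne_top_of_subset (image_mono inter_subset_right)
      (hausdorffMeasure_image_Ioc_ne_top (hC.mono Ioc_subset_Icc_self))
  · rw [h_left, h_agree, withDensity_apply _ measurableSet_Ioc,
      Measure.restrict_restrict measurableSet_Ioc]

theorem setIntegral_image_Ioc_hausdorffMeasure {F : Type*} [NormedAddCommGroup F]
    [NormedSpace ℝ F] {γ : ℝ → E} {a b : ℝ} (hγ : ContDiff ℝ 1 γ) (hinj : InjOn γ (Ioc a b))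
    (g : E → F) :
    ∫ x in γ '' Ioc a b, g x ∂μH[1] = ∫ t in Ioc a b, ‖deriv γ t‖ • g (γ t) := by
  have h_emb := ContinuousOn.measurableEmbedding measurableSet_Ioc hγ.continuous.continuousOn hinj
  have h_range : range ((Ioc a b).domRestrict γ) = γ '' Ioc a b := range_domRestrict γ _
  calc ∫ x in γ '' Ioc a b, g x ∂μH[1]
      = ∫ t, g (γ t) ∂((μH[1] : Measure E).comap ((Ioc a b).domRestrict γ)) := by
        rw [← h_range, ← h_emb.map_comap, h_emb.integral_map]
        rfl
    _ = ∫ t, g (γ t) ∂(volume.restrict (Ioc a b)).withDensity fun t => ‖deriv γ t‖ₑ := by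
        rw [← map_comap_domRestrict_hausdorffMeasure hγ hinj,
          (MeasurableEmbedding.subtype_coe measurableSet_Ioc).integral_map]
    _ = ∫ t in Ioc a b, ‖deriv γ t‖ • g (γ t) :=
        integral_withDensity_eq_integral_smul (hγ.continuous_deriv le_rfl).nnnorm.measurable _

end ArcLength

section TransversalZeros

open Filter Topology

theorem fderiv_apply_sub_pos_of_isMaxOn {E : Type*} [NormedAddCommGroup E] [NormedSpace ℝ E]
    {s : Set E} {f : E → ℝ} {f' : E →L[ℝ] ℝ} {x y : E} (hs : Convex ℝ s) (hx : x ∈ s)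
    (hmax : IsMaxOn f s x) (hf : HasFDerivAt f f' x) (hf' : f' ≠ 0) (hy : y ∈ interior s) :
    0 < f' (x - y) := by
  have h_nonpos : ∀ z ∈ s, f' z ≤ f' x := fun z hz => by
    simpa using hmax.localize.hasFDerivWithinAt_nonpos hf.hasFDerivWithinAt
      (sub_mem_posTangentConeAt_of_segment_subset (hs.segment_subset hx hz))
  rw [map_sub, sub_pos]
  refine (h_nonpos y (interior_subset hy)).lt_of_ne fun h_eq => hf' ?_
  have h_max_y : IsLocalMax f' y := by
    filter_upwards [mem_interior_iff_mem_nhds.1 hy] with z hz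
    exact h_eq ▸ h_nonpos z hz
  exact h_max_y.hasFDerivAt_eq_zero f'.hasFDerivAt

theorem existsUnique_pos_zero_of_deriv_pos {g : ℝ → ℝ} (hg : Differentiable ℝ g) (h₀ : g 0 < 0)
    (h_nonneg : ∃ s > 0, 0 ≤ g s) (h_deriv : ∀ s > 0, g s = 0 → 0 < deriv g s) :
    ∃! s, 0 < s ∧ g s = 0 := by
  -- Zeros are only crossed upwards, so `0 ≤ g` on `[s, u]`, which fails just before `u`.
  have h_not_lt : ∀ s u, 0 < s → g s = 0 → g u = 0 → ¬s < u := by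
    intro s u hs hgs hgu hsu
    have h_min : ∀ v ∈ Icc s u, 0 ≤ g v := fun v hv =>
      image_le_of_deriv_right_lt_deriv_boundary (f := 0) (f' := 0) continuousOn_const
        (fun _ _ => hasDerivWithinAt_const _ _ _) hgs.ge (fun v => (hg v).hasDerivAt)
        (fun v hv hgv => h_deriv v (hs.trans_le hv.1) hgv.symm) hv
    have h_localMin : IsLocalMinOn g (Icc s u) u :=
      IsMinOn.localize fun v hv => hgu.le.trans (h_min v hv)
    have h_cone := sub_mem_posTangentConeAt_of_segment_subset (x := u) (y := s)
      ((convex_Icc s u).segment_subset (right_mem_Icc.2 hsu.le) (left_mem_Icc.2 hsu.le))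
    have h_left := h_localMin.hasFDerivWithinAt_nonneg
      (hg u).hasDerivAt.hasFDerivAt.hasFDerivWithinAt h_cone
    have h_right := mul_neg_of_neg_of_pos (sub_neg.2 hsu) (h_deriv u (hs.trans hsu) hgu)
    exact h_left.not_gt (by simpa using h_right)
  obtain ⟨b, hb, hgb⟩ := h_nonneg
  obtain ⟨s, hs, hgs⟩ := intermediate_value_Ioc hb.le hg.continuous.continuousOn ⟨h₀, hgb⟩
  refine ⟨s, ⟨hs.1, hgs⟩, fun u hu => ?_⟩
  exact le_antisymm (not_lt.1 (h_not_lt s u hs.1 hgs hu.2)) (not_lt.1 (h_not_lt u s hu.1 hu.2 hgs))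

theorem contDiff_of_forall_eq_zero_iff {E : Type*} [NormedAddCommGroup E] [NormedSpace ℝ E]
    [CompleteSpace E] {n : WithTop ℕ∞} (hn : n ≠ 0) {f : E × ℝ → ℝ} (hf : ContDiff ℝ n f)
    {U : Set ℝ} (hU : IsOpen U) {r : E → ℝ} (hr : ∀ p, r p ∈ U)
    (hfr : ∀ p, ∀ s ∈ U, f (p, s) = 0 ↔ s = r p)
    (hf' : ∀ p, fderiv ℝ f (p, r p) (0, 1) ≠ 0) : ContDiff ℝ n r := by
  rw [contDiff_iff_contDiffAt]
  intro p
  have h_invertible : (fderiv ℝ f (p, r p) ∘L .inr ℝ E ℝ).IsInvertible :=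
    ⟨ContinuousLinearEquiv.unitsEquivAut ℝ (Units.mk0 _ (hf' p)), by ext; simp⟩
  have h_contDiffAt := hf.contDiffAt (x := (p, r p))
  have h_implicit := h_contDiffAt.contDiffAt_implicitFunction hn h_invertible
  refine h_implicit.congr_of_eventuallyEq ?_
  filter_upwards [h_contDiffAt.eventually_apply_implicitFunction hn h_invertible,
    h_implicit.continuousAt.eventually_mem (hU.mem_nhds
      ((h_contDiffAt.implicitFunction_apply_self hn h_invertible).symm ▸ hr p))] with q hq hqU
  exact ((hfr q _ hqU).1 (hq.trans ((hfr p _ (hr p)).2 rfl))).symm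

section Radius

variable {E : Type*} [NormedAddCommGroup E] [NormedSpace ℝ E] {φ : E → ℝ} {x₀ : E}

theorem hasDerivAt_comp_add_smul (hφ : Differentiable ℝ φ) (x₀ v : E) (s : ℝ) :
    HasDerivAt (fun u : ℝ => φ (x₀ + u • v)) (fderiv ℝ φ (x₀ + s • v) v) s := by
  simpa [Function.comp_def] using (hφ _).hasFDerivAt.comp_hasDerivAt s
    (((hasDerivAt_id s).smul_const v).const_add x₀)

theorem exists_pos_apply_add_smul_nonneg (hb : Bornology.IsBounded {x | φ x < 0}) (x₀ : E) {v : E}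
    (hv : v ≠ 0) : ∃ s : ℝ, 0 < s ∧ 0 ≤ φ (x₀ + s • v) := by
  obtain ⟨R, hR⟩ := hb.subset_ball x₀
  have h_norm : 0 < ‖v‖ := norm_pos_iff.2 hv
  refine ⟨(|R| + 1) / ‖v‖, by positivity, not_lt.1 fun h_neg => ?_⟩
  have h_ball := hR h_neg
  rw [mem_ball_iff_norm, add_sub_cancel_left, norm_smul, Real.norm_of_nonneg (by positivity),
    div_mul_cancel₀ _ h_norm.ne'] at h_ball
  linarith [le_abs_self R]

theorem exists_contDiff_radius {P : Type*} [NormedAddCommGroup P] [NormedSpace ℝ P]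
    [CompleteSpace P] {n : WithTop ℕ∞} (hn : n ≠ 0) (hφ : ContDiff ℝ n φ) (hx₀ : φ x₀ < 0)
    (hb : Bornology.IsBounded {x | φ x < 0})
    (htrans : ∀ x, φ x = 0 → 0 < fderiv ℝ φ x (x - x₀))
    {e : P → E} (he : ContDiff ℝ n e) (he₀ : ∀ p, e p ≠ 0) :
    ∃ r : P → ℝ, ContDiff ℝ n r ∧ (∀ p, 0 < r p) ∧
      ∀ p, ∀ s ∈ Ioi (0 : ℝ), φ (x₀ + s • e p) = 0 ↔ s = r p := by
  have h_line := hasDerivAt_comp_add_smul (hφ.differentiable hn) x₀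
  have h_radial : ∀ p, ∀ s : ℝ, 0 < s → φ (x₀ + s • e p) = 0 →
      0 < fderiv ℝ φ (x₀ + s • e p) (e p) := fun p s hs h_zero => by
    simpa [hs] using htrans _ h_zero
  have h_unique : ∀ p, ∃! s : ℝ, 0 < s ∧ φ (x₀ + s • e p) = 0 := fun p =>
    existsUnique_pos_zero_of_deriv_pos (fun s => (h_line (e p) s).differentiableAt)
      (by simpa using hx₀) (exists_pos_apply_add_smul_nonneg hb x₀ (he₀ p))
      fun s hs h_zero => (h_line (e p) s).deriv.symm ▸ h_radial p s hs h_zero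
  choose r hr hr_unique using h_unique
  have h_iff : ∀ p, ∀ s ∈ Ioi (0 : ℝ), φ (x₀ + s • e p) = 0 ↔ s = r p := fun p s hs =>
    ⟨fun h => hr_unique p s ⟨hs, h⟩, fun h => h ▸ (hr p).2⟩
  have h_contDiff : ContDiff ℝ n fun q : P × ℝ => φ (x₀ + q.2 • e q.1) := by fun_prop
  refine ⟨r, contDiff_of_forall_eq_zero_iff hn h_contDiff isOpen_Ioi (fun p => (hr p).1) h_iff
    fun p => ?_, fun p => (hr p).1, h_iff⟩
  have h_vertical := ((h_contDiff.differentiable hn (p, r p)).hasFDerivAt.comp_hasDerivAt (r p)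
    ((hasDerivAt_const _ p).prodMk (hasDerivAt_id _))).unique (h_line (e p) (r p))
  exact h_vertical ▸ (h_radial p _ (hr p).1 (hr p).2).ne'

end Radius

end TransversalZeros

section PolarCoordinates

open Real

/-- The unit vector at angle `t`, the direction of the ray along which `∂K` is met at time `t`. -/
def unitVec (t : ℝ) : E2 := !₂[cos t, sin t]

/-- The counterclockwise rotation by a quarter turn, taking outer normals to tangents. -/
def rot (v : E2) : E2 := !₂[-v 1, v 0]

@[simp] theorem unitVec_apply_zero (t : ℝ) : unitVec t 0 = cos t := rfl

@[simp] theorem unitVec_apply_one (t : ℝ) : unitVec t 1 = sin t := rfl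

@[simp] theorem rot_apply_zero (v : E2) : rot v 0 = -v 1 := rfl

@[simp] theorem rot_apply_one (v : E2) : rot v 1 = v 0 := rfl

theorem inner_eq_add (x y : E2) : ⟪x, y⟫ = x 0 * y 0 + x 1 * y 1 := by
  simp [PiLp.inner_apply, Fin.sum_univ_two, mul_comm]

theorem inner_rot_rot (x y : E2) : ⟪rot x, rot y⟫ = ⟪x, y⟫ := by
  simp only [inner_eq_add, rot_apply_zero, rot_apply_one]
  ring

theorem norm_sq_eq_add (x : E2) : ‖x‖ ^ 2 = x 0 ^ 2 + x 1 ^ 2 := by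
  simp [EuclideanSpace.norm_sq_eq, Fin.sum_univ_two]

@[simp] theorem norm_unitVec (t : ℝ) : ‖unitVec t‖ = 1 := by
  rw [← sq_eq_sq₀ (norm_nonneg _) zero_le_one, norm_sq_eq_add]
  simp

@[simp] theorem norm_rot (x : E2) : ‖rot x‖ = ‖x‖ := by
  rw [← sq_eq_sq₀ (norm_nonneg _) (norm_nonneg _), ← real_inner_self_eq_norm_sq, inner_rot_rot,
    real_inner_self_eq_norm_sq]

theorem inner_rot_self (x : E2) : ⟪rot x, x⟫ = 0 := by
  rw [inner_eq_add, rot_apply_zero, rot_apply_one]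
  ring

theorem norm_sq_smul_eq_smul_rot {x y : E2} (h : ⟪x, y⟫ = 0) :
    ‖x‖ ^ 2 • y = ⟪rot x, y⟫ • rot x := by
  rw [inner_eq_add] at h
  ext i
  fin_cases i <;>
    simp only [inner_eq_add, norm_sq_eq_add, PiLp.smul_apply, smul_eq_mul, rot_apply_zero,
      rot_apply_one, Fin.zero_eta, Fin.mk_one]
  · linear_combination x 0 * h
  · linear_combination x 1 * h

theorem unitVec_ne_zero (t : ℝ) : unitVec t ≠ 0 := norm_ne_zero_iff.1 (by simp)

theorem unitVec_pi : unitVec π = unitVec (-π) := by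
  simp [unitVec]

theorem contDiff_unitVec {n : WithTop ℕ∞} : ContDiff ℝ n unitVec := by
  rw [contDiff_piLp]
  intro i
  fin_cases i
  · exact contDiff_cos
  · exact contDiff_sin

theorem hasDerivAt_unitVec (t : ℝ) : HasDerivAt unitVec (rot (unitVec t)) t := by
  have h_pi : HasDerivAt (fun s => ![cos s, sin s]) ![-sin t, cos t] t := by
    refine hasDerivAt_pi.2 fun i => ?_
    fin_cases i
    · exact hasDerivAt_cos t
    · exact hasDerivAt_sin t
  exact (EuclideanSpace.equiv (Fin 2) ℝ).symm.hasFDerivAt.comp_hasDerivAt t h_pi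

theorem complex_repr_exp_mul_I (t : ℝ) :
    Complex.orthonormalBasisOneI.repr (Complex.exp (t * Complex.I)) = unitVec t := by
  ext i
  fin_cases i <;> simp [Complex.exp_ofReal_mul_I_re, Complex.exp_ofReal_mul_I_im]

theorem complex_repr_polarCoord_symm (p : ℝ × ℝ) :
    Complex.orthonormalBasisOneI.repr (Complex.polarCoord.symm p) = p.1 • unitVec p.2 := by
  rw [Complex.polarCoord_symm_apply, Complex.ofReal_cos, Complex.ofReal_sin, ← Complex.exp_mul_I,
    ← Complex.real_smul, map_smul, complex_repr_exp_mul_I]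

theorem exists_eq_smul_unitVec (x : E2) : ∃ t ∈ Ioc (-π) π, x = ‖x‖ • unitVec t := by
  set z := Complex.orthonormalBasisOneI.repr.symm x with hz
  refine ⟨z.arg, Complex.arg_mem_Ioc z, ?_⟩
  have h_polar : z = ‖x‖ • Complex.exp (z.arg * Complex.I) := by
    rw [Complex.real_smul, ← Complex.orthonormalBasisOneI.repr.symm.norm_map x, ← hz,
      Complex.norm_mul_exp_arg_mul_I]
  rw [← complex_repr_exp_mul_I, ← map_smul, ← h_polar, hz, LinearIsometryEquiv.apply_symm_apply]

theorem injOn_smul_unitVec {r : ℝ → ℝ} (hr : ∀ t, 0 < r t) :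
    InjOn (fun t => r t • unitVec t) (Ioc (-π) π) := by
  have h_arg : ∀ t ∈ Ioc (-π) π,
      (Complex.orthonormalBasisOneI.repr.symm (r t • unitVec t)).arg = t := by
    intro t ht
    rw [← complex_repr_exp_mul_I, ← map_smul, LinearIsometryEquiv.symm_apply_apply,
      Complex.real_smul, Complex.exp_mul_I]
    exact Complex.arg_mul_cos_add_sin_mul_I (hr t) ht
  intro s hs t ht h_eq
  rw [← h_arg s hs, ← h_arg t ht]
  exact congrArg _ (congrArg _ h_eq)

theorem image_add_smul_unitVec_eq {Z : Set E2} {x₀ : E2} (hx₀ : x₀ ∉ Z) {r : ℝ → ℝ}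
    (hr : ∀ t, 0 < r t) (hZ : ∀ t, ∀ s ∈ Ioi (0 : ℝ), x₀ + s • unitVec t ∈ Z ↔ s = r t) :
    (fun t => x₀ + r t • unitVec t) '' Ioc (-π) π = Z := by
  refine Subset.antisymm (image_subset_iff.2 fun t _ => (hZ t _ (hr t)).2 rfl) fun x hx => ?_
  obtain ⟨t, ht, h_polar⟩ := exists_eq_smul_unitVec (x - x₀)
  have h_eq : x₀ + ‖x - x₀‖ • unitVec t = x := by rw [← h_polar, add_sub_cancel]
  have h_pos : 0 < ‖x - x₀‖ := norm_pos_iff.2 (sub_ne_zero.2 fun h => hx₀ (h ▸ hx))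
  have h_radius : ‖x - x₀‖ = r t := (hZ t _ h_pos).1 (h_eq.symm ▸ hx)
  rw [h_radius] at h_eq
  exact ⟨t, ht, h_eq⟩

theorem lintegral_eq_lintegral_smul_unitVec {f : E2 → ℝ≥0∞} (hf : Measurable f) :
    ∫⁻ x, f x = ∫⁻ t in Ioc (-π) π, ∫⁻ r in Ioi (0 : ℝ), ENNReal.ofReal r * f (r • unitVec t) := by
  have h_meas : Measurable fun p : ℝ × ℝ => ENNReal.ofReal p.1 * f (p.1 • unitVec p.2) := by
    have := contDiff_unitVec (n := 0) |>.continuous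
    exact (by fun_prop : Measurable fun p : ℝ × ℝ => ENNReal.ofReal p.1).mul
      (hf.comp (by fun_prop : Continuous fun p : ℝ × ℝ => p.1 • unitVec p.2).measurable)
  rw [← Complex.orthonormalBasisOneI.measurePreserving_repr.lintegral_comp hf,
    ← Complex.lintegral_comp_polarCoord_symm, polarCoord_target, Measure.volume_eq_prod,
    ← Measure.prod_restrict, Measure.restrict_congr_set Ioo_ae_eq_Ioc]
  simp only [complex_repr_polarCoord_symm, smul_eq_mul]
  exact lintegral_prod_symm _ h_meas.aemeasurable

theorem lintegral_Ioi_ofReal_mul_indicator_Iio {c : ℝ} (hc : 0 ≤ c) :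
    ∫⁻ r in Ioi (0 : ℝ), ENNReal.ofReal r * (Iio c).indicator 1 r = ENNReal.ofReal (c ^ 2 / 2) := by
  have h_indicator : ∀ r, ENNReal.ofReal r * (Iio c).indicator 1 r =
      (Iio c).indicator ENNReal.ofReal r := fun r => by
    by_cases h : r ∈ Iio c <;> simp [h]
  simp_rw [h_indicator]
  rw [setLIntegral_indicator measurableSet_Iio, Iio_inter_Ioi,
    Measure.restrict_congr_set Ioo_ae_eq_Ioc, ← ofReal_integral_eq_lintegral_ofReal,
    ← intervalIntegral.integral_of_le hc, integral_id, sub_eq_self.2 (by norm_num)]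
  · exact continuous_id.integrableOn_Ioc
  · filter_upwards [ae_restrict_mem measurableSet_Ioc] with r hr using hr.1.le

theorem two_mul_volume_setOf_lt_one {P : E2 → ℝ} (hP : Continuous P)
    (hpos : ∀ x ≠ 0, 0 < P x) (hhom : ∀ s : ℝ, 0 < s → ∀ x, P (s • x) = s * P x) :
    2 * (volume {x | P x < 1}).toReal = ∫ t in (-π)..π, (P (unitVec t) ^ 2)⁻¹ := by
  have h_pos : ∀ t, 0 < P (unitVec t) := fun t => hpos _ (unitVec_ne_zero t)
  have h_meas : MeasurableSet {x | P x < 1} := (isOpen_lt hP continuous_const).measurableSet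
  have h_cont : Continuous fun t => (P (unitVec t) ^ 2)⁻¹ :=
    ((hP.comp (contDiff_unitVec (n := 0)).continuous).pow 2).inv₀ fun t => (pow_pos (h_pos t) 2).ne'
  have h_radial : ∀ t, ∫⁻ r in Ioi (0 : ℝ),
      ENNReal.ofReal r * {x | P x < 1}.indicator 1 (r • unitVec t) =
        ENNReal.ofReal ((P (unitVec t) ^ 2)⁻¹ / 2) := fun t => by
    rw [← inv_pow, ← lintegral_Ioi_ofReal_mul_indicator_Iio (inv_pos.2 (h_pos t)).le]
    refine setLIntegral_congr_fun measurableSet_Ioi fun r hr => ?_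
    have h_iff : P (r • unitVec t) < 1 ↔ r < (P (unitVec t))⁻¹ := by
      rw [hhom r hr, lt_inv_comm₀ hr (h_pos t), ← one_div, lt_div_iff₀' hr]
    simp [indicator_apply, h_iff]
  have h_volume : volume {x | P x < 1} =
      ENNReal.ofReal (∫ t in Ioc (-π) π, (P (unitVec t) ^ 2)⁻¹ / 2) := by
    rw [← lintegral_indicator_one h_meas,
      lintegral_eq_lintegral_smul_unitVec (measurable_one.indicator h_meas),
      ofReal_integral_eq_lintegral_ofReal]
    · simp_rw [h_radial]
    · exact (h_cont.div_const 2).integrableOn_Ioc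
    · exact .of_forall fun t => by positivity
  rw [h_volume, ENNReal.toReal_ofReal (integral_nonneg fun t => by positivity), integral_div,
    intervalIntegral.integral_of_le (by linarith [pi_pos])]
  ring

end PolarCoordinates

section AngularChange

open Complex Real

/-- The continuous determination of the argument of `n t` that stays within `π` of `t`, for a
path `n` such that `n t` is never a nonpositive multiple of `exp (t * I)`. -/
def angleLift (n : ℝ → ℂ) (t : ℝ) : ℝ := t + arg (n t * exp (-(t * I)))

variable {n n' : ℝ → ℂ}

theorem norm_mul_exp_angleLift (n : ℝ → ℂ) (t : ℝ) :
    ‖n t‖ * exp (angleLift n t * I) = n t := by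
  have h_norm : ‖n t * exp (-(t * I))‖ = ‖n t‖ := by
    rw [norm_mul, ← neg_mul, ← ofReal_neg, norm_exp_ofReal_mul_I, mul_one]
  rw [angleLift, ofReal_add, add_mul, Complex.exp_add, ← h_norm, mul_left_comm,
    norm_mul_exp_arg_mul_I, mul_left_comm, ← Complex.exp_add, add_neg_cancel, Complex.exp_zero,
    mul_one]

theorem angleLift_pi (hper : n π = n (-π)) : angleLift n π = angleLift n (-π) + 2 * π := by
  have h_exp : exp (-(π * I)) = exp (-((-π : ℝ) * I)) := by
    rw [ofReal_neg, neg_mul, neg_neg, Complex.exp_neg, exp_pi_mul_I, inv_neg_one]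
  rw [angleLift, angleLift, hper, h_exp]
  ring

theorem hasDerivAt_angleLift {t : ℝ} {v : ℂ} (hn : HasDerivAt n v t)
    (hslit : n t * exp (-(t * I)) ∈ slitPlane) :
    HasDerivAt (angleLift n) (v / n t).im t := by
  have h_exp : HasDerivAt (fun s : ℝ => exp (-(s * I))) (exp (-(t * I)) * (-I)) t := by
    simpa using ((hasDerivAt_id (t : ℂ)).mul_const I).neg.cexp.comp_ofReal
  have h_log := (hn.mul h_exp).clog_real hslit
  have h_im : HasDerivAt (fun s => (log (n s * exp (-(s * I)))).im)
      ((v * exp (-(t * I)) + n t * (exp (-(t * I)) * -I)) / (n t * exp (-(t * I)))).im t :=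
    imCLM.hasFDerivAt.comp_hasDerivAt t h_log
  have h_n : n t ≠ 0 := left_ne_zero_of_mul (slitPlane_ne_zero hslit)
  simp only [log_im] at h_im
  refine ((hasDerivAt_id t).add h_im).congr_deriv ?_
  have h_split : (v * exp (-(t * I)) + n t * (exp (-(t * I)) * -I)) / (n t * exp (-(t * I))) =
      v / n t - I := by
    field_simp [Complex.exp_ne_zero]
    ring
  rw [h_split, sub_im, I_im]
  ring

theorem integral_mul_im_div (hn : ∀ t, HasDerivAt n (n' t) t) (hn' : Continuous n')
    (hslit : ∀ t, n t * exp (-(t * I)) ∈ slitPlane) (hper : n π = n (-π)) {F : ℂ → ℝ}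
    (hF : ContinuousOn F {0}ᶜ) (hhom : ∀ s : ℝ, 0 < s → ∀ z : ℂ, F (s * z) = F z) :
    ∫ t in (-π)..π, F (n t) * (n' t / n t).im = ∫ t in (-π)..π, F (exp (t * I)) := by
  have h_ne : ∀ t, n t ≠ 0 := fun t => left_ne_zero_of_mul (slitPlane_ne_zero (hslit t))
  have hn_cont : Continuous n := continuous_iff_continuousAt.2 fun t => (hn t).continuousAt
  have h_comp : ∀ t, F (n t) = F (exp (angleLift n t * I)) := fun t => by
    conv_lhs => rw [← norm_mul_exp_angleLift n t, hhom _ (norm_pos_iff.2 (h_ne t))]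
  have h_cont : Continuous fun θ : ℝ => F (exp (θ * I)) :=
    hF.comp_continuous (by fun_prop) fun θ => Complex.exp_ne_zero _
  have h_periodic : Function.Periodic (fun θ : ℝ => F (exp (θ * I))) (2 * π) := fun θ => by
    simp only [ofReal_add, ofReal_mul, ofReal_ofNat, exp_mul_I_periodic (θ : ℂ)]
  simp_rw [h_comp]
  calc ∫ t in (-π)..π, F (exp (angleLift n t * I)) * (n' t / n t).im
      = ∫ θ in angleLift n (-π)..angleLift n π, F (exp (θ * I)) :=
        intervalIntegral.integral_comp_mul_deriv
          (fun t _ => hasDerivAt_angleLift (hn t) (hslit t))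
          (continuous_im.comp (hn'.div hn_cont h_ne)).continuousOn h_cont
    _ = ∫ θ in (-π)..π, F (exp (θ * I)) := by
        rw [angleLift_pi hper, h_periodic.intervalIntegral_add_eq _ (-π),
          show -π + 2 * π = π by ring]

theorem im_complex_repr_symm_div (x y : E2) :
    (orthonormalBasisOneI.repr.symm y / orthonormalBasisOneI.repr.symm x).im =
      ⟪rot x, y⟫ / ‖x‖ ^ 2 := by
  rw [div_im, normSq_eq_norm_sq, LinearIsometryEquiv.norm_map, inner_eq_add]
  simp only [orthonormalBasisOneI_repr_symm_apply, add_re, add_im, mul_re, mul_im, ofReal_re,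
    ofReal_im, I_re, I_im, rot_apply_zero, rot_apply_one]
  ring

theorem re_complex_repr_symm_mul_exp (x : E2) (t : ℝ) :
    (orthonormalBasisOneI.repr.symm x * exp (-(t * I))).re = ⟪x, unitVec t⟫ := by
  rw [orthonormalBasisOneI_repr_symm_apply, ← neg_mul, ← ofReal_neg, exp_mul_I, inner_eq_add]
  simp [← ofReal_cos, ← ofReal_sin]

/-- A closed path turning once around the origin sweeps out every direction once, so it may be
replaced by the unit circle in the integral of a `0`-homogeneous function against the angle. -/
theorem integral_mul_inner_rot_deriv_div {n : ℝ → E2} (hn : ContDiff ℝ 1 n)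
    (hpos : ∀ t, 0 < ⟪n t, unitVec t⟫) (hper : n π = n (-π)) {F : E2 → ℝ}
    (hF : ContinuousOn F {0}ᶜ) (hhom : ∀ s : ℝ, 0 < s → ∀ x, F (s • x) = F x) :
    ∫ t in (-π)..π, F (n t) * (⟪rot (n t), deriv n t⟫ / ‖n t‖ ^ 2) =
      ∫ t in (-π)..π, F (unitVec t) := by
  have h_complex := integral_mul_im_div (F := F ∘ orthonormalBasisOneI.repr)
    (fun t => orthonormalBasisOneI.repr.symm.toContinuousLinearEquiv.hasFDerivAt.comp_hasDerivAt t
      (hn.differentiable one_ne_zero t).hasDerivAt)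
    (orthonormalBasisOneI.repr.symm.continuous.comp hn.continuous_deriv_one)
    (fun t => .inl ((hpos t).trans_eq (re_complex_repr_symm_mul_exp (n t) t).symm))
    (congrArg orthonormalBasisOneI.repr.symm hper)
    (hF.comp (LinearIsometryEquiv.continuous _).continuousOn fun z hz =>
      (LinearIsometryEquiv.map_eq_zero_iff _).not.2 hz)
    (fun s hs z => by
      rw [Function.comp_apply, ← real_smul, map_smul, hhom s hs, Function.comp_apply])
  simpa only [Function.comp_apply, LinearIsometryEquiv.coe_toContinuousLinearEquiv,
    ContinuousLinearEquiv.coe_coe, LinearIsometryEquiv.apply_symm_apply,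
    complex_repr_exp_mul_I, im_complex_repr_symm_div] using h_complex

end AngularChange

section SymmetricMatrix

open Matrix

variable {x : E2}

theorem toEuclideanCLM_rot {A : Matrix (Fin 2) (Fin 2) ℝ} (hA : A.IsSymm)
    (hx : toEuclideanCLM (𝕜 := ℝ) A x = 0) :
    toEuclideanCLM (𝕜 := ℝ) A (rot x) = A.trace • rot x := by
  have h_symm : A 1 0 = A 0 1 := hA.apply 0 1
  have h₀ := congrFun (congrArg WithLp.ofLp hx) 0
  have h₁ := congrFun (congrArg WithLp.ofLp hx) 1
  simp only [ofLp_toEuclideanCLM, mulVec, dotProduct, Fin.sum_univ_two, PiLp.zero_apply,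
    h_symm] at h₀ h₁
  ext i
  fin_cases i <;>
    simp only [ofLp_toEuclideanCLM, mulVec, dotProduct, Fin.sum_univ_two, Fin.zero_eta,
      Fin.mk_one, PiLp.smul_apply, smul_eq_mul, trace_fin_two, rot_apply_zero, rot_apply_one,
      h_symm]
  · linear_combination h₁
  · linear_combination -h₀

theorem norm_sq_mul_sum_mul (A B : Matrix (Fin 2) (Fin 2) ℝ) (x : E2) :
    ‖x‖ ^ 2 * ∑ i, ∑ j, A i j * B i j =
      ⟪toEuclideanCLM (𝕜 := ℝ) A x, toEuclideanCLM (𝕜 := ℝ) B x⟫ +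
        ⟪toEuclideanCLM (𝕜 := ℝ) A (rot x), toEuclideanCLM (𝕜 := ℝ) B (rot x)⟫ := by
  simp only [norm_sq_eq_add, inner_eq_add, ofLp_toEuclideanCLM, mulVec, dotProduct,
    Fin.sum_univ_two, rot_apply_zero, rot_apply_one]
  ring

end SymmetricMatrix

section GradientHessian

theorem fderiv_apply_self_eq_of_smul_eq {E F : Type*} [NormedAddCommGroup E] [NormedSpace ℝ E]
    [NormedAddCommGroup F] [NormedSpace ℝ F] {f : E → F} {x : E} (hf : DifferentiableAt ℝ f x)
    {g : ℝ → F} {g' : F} (hg : HasDerivAt g g' 1) (h : ∀ t : ℝ, 0 < t → f (t • x) = g t) :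
    fderiv ℝ f x x = g' := by
  have h_fderiv : HasFDerivAt f (fderiv ℝ f x) ((1 : ℝ) • x) := by simpa using hf.hasFDerivAt
  have h_ray : HasDerivAt (fun t : ℝ => t • x) x 1 := by
    simpa using (hasDerivAt_id (1 : ℝ)).smul_const x
  refine (h_fderiv.comp_hasDerivAt 1 h_ray).unique (hg.congr_of_eventuallyEq ?_)
  filter_upwards [lt_mem_nhds zero_lt_one] with t ht using h t ht

theorem contDiffAt_gradient {E : Type*} [NormedAddCommGroup E] [InnerProductSpace ℝ E]
    [CompleteSpace E] {f : E → ℝ} {x : E} {n : WithTop ℕ∞} (hf : ContDiffAt ℝ (n + 1) f x) :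
    ContDiffAt ℝ n (gradient f) x :=
  (InnerProductSpace.toDual ℝ E).symm.contDiff.contDiffAt.comp x (hf.fderiv_right le_rfl)

variable {f : E2 → ℝ} {x : E2}

theorem gradient_apply (f : E2 → ℝ) (x : E2) (i : Fin 2) : gradient f x i = pd f i x := by
  rw [pd, ← inner_gradient_left, EuclideanSpace.inner_single_right]
  simp

theorem contDiffOn_pd {U : Set E2} (hU : IsOpen U) (hf : ContDiffOn ℝ 2 f U) (i : Fin 2) :
    ContDiffOn ℝ 1 (pd f i) U :=
  (hf.fderiv_of_isOpen hU one_add_one_eq_two.le).clm_apply contDiffOn_const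

theorem continuousOn_hessian {U : Set E2} (hU : IsOpen U) (hf : ContDiffOn ℝ 2 f U) :
    ContinuousOn (hessian f) U :=
  continuousOn_pi.2 fun _ => continuousOn_pi.2 fun j =>
    ((contDiffOn_pd hU hf j).continuousOn_fderiv_of_isOpen hU le_rfl).clm_apply continuousOn_const

theorem fderiv_pd (hf : ContDiffAt ℝ 2 f x) (j : Fin 2) (v : E2) :
    fderiv ℝ (pd f j) x v = fderiv ℝ (fderiv ℝ f) x v (EuclideanSpace.single j 1) := by
  have h_diff : DifferentiableAt ℝ (fderiv ℝ f) x :=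
    (hf.fderiv_right (m := 1) one_add_one_eq_two.le).differentiableAt one_ne_zero
  have h_pd : HasFDerivAt (pd f j) _ x := h_diff.hasFDerivAt.clm_apply (hasFDerivAt_const _ _)
  simp [h_pd.fderiv]

theorem hessian_isSymm (hf : ContDiffAt ℝ 2 f x) : (hessian f x).IsSymm := by
  ext i j
  simp only [hessian, Matrix.transpose_apply, Matrix.of_apply]
  rw [pd, pd, fderiv_pd hf, fderiv_pd hf]
  exact hf.isSymmSndFDerivAt (by simp) _ _

theorem hasFDerivAt_gradient (hf : ContDiffAt ℝ 2 f x) :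
    HasFDerivAt (gradient f) (Matrix.toEuclideanCLM (𝕜 := ℝ) (hessian f x)) x := by
  have h_diff : DifferentiableAt ℝ (gradient f) x :=
    (contDiffAt_gradient (n := 1) (hf.of_le one_add_one_eq_two.le)).differentiableAt one_ne_zero
  have h_pd : ∀ i j, pd (pd f j) i x = fderiv ℝ (gradient f) x (EuclideanSpace.single i 1) j :=
    fun i j => by
      have h_comp : pd f j = EuclideanSpace.proj j ∘ gradient f :=
        funext fun y => (gradient_apply f y j).symm
      rw [h_comp, pd, ((EuclideanSpace.proj j).hasFDerivAt.comp x h_diff.hasFDerivAt).fderiv]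
      rfl
  convert h_diff.hasFDerivAt using 1
  refine ContinuousLinearMap.coe_injective
    ((EuclideanSpace.basisFun (Fin 2) ℝ).toBasis.ext fun i => ?_)
  ext j
  simp only [OrthonormalBasis.coe_toBasis, EuclideanSpace.basisFun_apply,
    ContinuousLinearMap.coe_coe, Matrix.ofLp_toEuclideanCLM, PiLp.ofLp_single,
    Matrix.mulVec_single_one, Matrix.col_apply, ← h_pd]
  exact (hessian_isSymm hf).apply i j

theorem gradient_fun_neg (f : E2 → ℝ) (x : E2) :
    gradient (fun y => -f y) x = -gradient f x := by
  simp only [gradient, fderiv_fun_neg, map_neg]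

theorem pd_fun_neg (f : E2 → ℝ) (i : Fin 2) : pd (fun y => -f y) i = fun y => -pd f i y := by
  funext x
  simp only [pd, fderiv_fun_neg, neg_apply]

theorem hessian_fun_neg (f : E2 → ℝ) (x : E2) : hessian (fun y => -f y) x = -hessian f x := by
  ext i j
  simp only [hessian, pd_fun_neg, Matrix.of_apply, Matrix.neg_apply]

theorem pd_smul_of_forall_smul_eq {t c : ℝ} (ht : t ≠ 0) (h : ∀ y, f (t • y) = c * f y) (i : Fin 2)
    (x : E2) : pd f i (t • x) = c / t * pd f i x := by
  have h_fderiv : c • fderiv ℝ f x = t • fderiv ℝ f (t • x) := by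
    have h_fun : (fun y => f (t • y)) = c • f := funext h
    rw [← fderiv_comp_smul, h_fun, fderiv_const_smul_field]
    rfl
  have h_apply := DFunLike.congr_fun h_fderiv (EuclideanSpace.single i 1)
  simp only [smul_apply, smul_eq_mul] at h_apply
  rw [pd, pd, div_mul_eq_mul_div, eq_div_iff ht, h_apply, mul_comm]

end GradientHessian

section Anisotropy

/-- A norm on the plane that is of class `C²` away from the origin, the kind of anisotropy for which
the Gauss–Bonnet formula is proved; its axioms are phrased as in `IsAnisoNorm`. -/
structure IsC2Norm (H : E2 → ℝ) : Prop where
  convex : ConvexOn ℝ univ H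
  coercive : ∃ α > 0, ∀ ξ, α * ‖ξ‖ ≤ H ξ
  homog : ∀ (t : ℝ) (ξ : E2), H (t • ξ) = |t| * H ξ
  smooth : ContDiffOn ℝ 2 H {0}ᶜ

variable {H : E2 → ℝ} {ξ : E2}

theorem IsAnisoNorm.isC2Norm (hH : IsAnisoNorm H) : IsC2Norm H :=
  ⟨hH.convex, hH.coercive, hH.homog, hH.smooth⟩

theorem polar_smul (H : E2 → ℝ) (v : E2) {s : ℝ} (hs : 0 ≤ s) :
    polar H (s • v) = s * polar H v := by
  simp only [polar, Real.mul_iSup_of_nonneg hs, inner_smul_right, mul_div_assoc]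

theorem polar_le (v : E2) {c : ℝ} (h : ∀ ξ ≠ 0, ⟪ξ, v⟫ / H ξ ≤ c) : polar H v ≤ c :=
  have : Nonempty {ξ : E2 // ξ ≠ 0} := ⟨⟨unitVec 0, unitVec_ne_zero 0⟩⟩
  ciSup_le fun ξ => h ξ ξ.2

namespace IsC2Norm

theorem pos (hH : IsC2Norm H) (hξ : ξ ≠ 0) : 0 < H ξ := by
  obtain ⟨α, hα, h_le⟩ := hH.coercive
  exact (mul_pos hα (norm_pos_iff.2 hξ)).trans_le (h_le ξ)

theorem add_le (hH : IsC2Norm H) (ξ η : E2) : H (ξ + η) ≤ H ξ + H η := by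
  have h_mid := hH.convex.2 (mem_univ ξ) (mem_univ η) one_half_pos.le one_half_pos.le
    (add_halves (1 : ℝ))
  rw [← smul_add, hH.homog, abs_of_pos one_half_pos, smul_eq_mul, smul_eq_mul] at h_mid
  linarith

theorem contDiffAt (hH : IsC2Norm H) (hξ : ξ ≠ 0) : ContDiffAt ℝ 2 H ξ :=
  hH.smooth.contDiffAt (isOpen_compl_singleton.mem_nhds hξ)

theorem gradient_smul (hH : IsC2Norm H) {t : ℝ} (ht : 0 < t) (ξ : E2) :
    gradient H (t • ξ) = gradient H ξ := by
  ext i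
  rw [gradient_apply, gradient_apply, pd_smul_of_forall_smul_eq ht.ne' (hH.homog t),
    abs_of_pos ht, div_self ht.ne', one_mul]

theorem hessian_smul (hH : IsC2Norm H) {t : ℝ} (ht : t ≠ 0) (ξ : E2) :
    hessian H (t • ξ) = |t|⁻¹ • hessian H ξ := by
  ext i j
  have h_pd := pd_smul_of_forall_smul_eq ht (pd_smul_of_forall_smul_eq ht (hH.homog t) j) i ξ
  have h_coeff : |t| / t / t = |t|⁻¹ := by
    rw [div_div, ← abs_mul_abs_self t]
    field_simp
  rwa [h_coeff] at h_pd

theorem mul_trace_hessian_smul (hH : IsC2Norm H) {t : ℝ} (ht : 0 < t) (ξ : E2) :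
    H (t • ξ) * (hessian H (t • ξ)).trace = H ξ * (hessian H ξ).trace := by
  rw [hH.homog, hH.hessian_smul ht.ne', abs_of_pos ht, Matrix.trace_smul, smul_eq_mul]
  field_simp

theorem continuousOn_mul_trace_hessian (hH : IsC2Norm H) :
    ContinuousOn (fun ξ => H ξ * (hessian H ξ).trace) {0}ᶜ :=
  hH.smooth.continuousOn.mul
    (continuous_id.matrix_trace.comp_continuousOn
      (continuousOn_hessian isOpen_compl_singleton hH.smooth))

theorem inner_gradient_self (hH : IsC2Norm H) (hξ : ξ ≠ 0) : ⟪gradient H ξ, ξ⟫ = H ξ := by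
  rw [inner_gradient_left]
  refine fderiv_apply_self_eq_of_smul_eq ((hH.contDiffAt hξ).differentiableAt two_ne_zero)
    (g := fun t => t * H ξ) (by simpa using (hasDerivAt_id (1 : ℝ)).mul_const (H ξ)) fun t ht => ?_
  rw [hH.homog, abs_of_pos ht]

theorem gradient_ne_zero (hH : IsC2Norm H) (hξ : ξ ≠ 0) : gradient H ξ ≠ 0 := fun h_zero => by
  have h_euler := hH.inner_gradient_self hξ
  rw [h_zero, inner_zero_left] at h_euler
  exact (hH.pos hξ).ne h_euler

theorem hessian_apply_self (hH : IsC2Norm H) (hξ : ξ ≠ 0) :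
    Matrix.toEuclideanCLM (𝕜 := ℝ) (hessian H ξ) ξ = 0 := by
  have h_grad := hasFDerivAt_gradient (hH.contDiffAt hξ)
  rw [← h_grad.fderiv]
  exact fderiv_apply_self_eq_of_smul_eq h_grad.differentiableAt (hasDerivAt_const 1 _)
    fun t ht => hH.gradient_smul ht ξ

theorem inner_gradient_le (hH : IsC2Norm H) (hξ : ξ ≠ 0) (η : E2) : ⟪gradient H ξ, η⟫ ≤ H η := by
  have h_slope := ((hH.contDiffAt hξ).differentiableAt two_ne_zero).hasFDerivAt.hasLineDerivAt η
    |>.tendsto_slope_zero_right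
  rw [inner_gradient_left]
  refine le_of_tendsto h_slope ?_
  filter_upwards [self_mem_nhdsWithin] with t ht
  have ht : 0 < t := ht
  have h_add := hH.add_le ξ (t • η)
  rw [hH.homog, abs_of_pos ht] at h_add
  rw [smul_eq_mul, inv_mul_le_iff₀ ht]
  linarith

theorem exists_inner_div_le (hH : IsC2Norm H) :
    ∃ C : ℝ≥0, ∀ v ξ : E2, ξ ≠ 0 → ⟪ξ, v⟫ / H ξ ≤ C * ‖v‖ := by
  obtain ⟨α, hα, h_le⟩ := hH.coercive
  refine ⟨⟨α⁻¹, (inv_pos.2 hα).le⟩, fun v ξ hξ => ?_⟩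
  rw [div_le_iff₀ (hH.pos hξ)]
  calc ⟪ξ, v⟫ ≤ ‖ξ‖ * ‖v‖ := real_inner_le_norm ξ v
    _ = α⁻¹ * ‖v‖ * (α * ‖ξ‖) := by field_simp
    _ ≤ α⁻¹ * ‖v‖ * H ξ := by gcongr; exact h_le ξ

theorem inner_div_le_polar (hH : IsC2Norm H) (v : E2) (hξ : ξ ≠ 0) : ⟪ξ, v⟫ / H ξ ≤ polar H v := by
  obtain ⟨C, h_le⟩ := hH.exists_inner_div_le
  exact le_ciSup (f := fun ξ : {ξ : E2 // ξ ≠ 0} => ⟪(ξ : E2), v⟫ / H ξ)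
    ⟨C * ‖v‖, forall_mem_range.2 fun ξ => h_le v ξ ξ.2⟩ ⟨ξ, hξ⟩

theorem continuous_polar (hH : IsC2Norm H) : Continuous (polar H) := by
  obtain ⟨C, h_le⟩ := hH.exists_inner_div_le
  refine (LipschitzWith.of_le_add_mul C fun v w => polar_le v fun ξ hξ => ?_).continuous
  have h_sub := h_le (v - w) ξ hξ
  rw [inner_sub_right, sub_div, ← dist_eq_norm] at h_sub
  linarith [hH.inner_div_le_polar w hξ]

theorem polar_pos (hH : IsC2Norm H) {v : E2} (hv : v ≠ 0) : 0 < polar H v :=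
  (div_pos (real_inner_self_pos.2 hv) (hH.pos hv)).trans_le (hH.inner_div_le_polar v hv)

theorem polar_gradient (hH : IsC2Norm H) (hξ : ξ ≠ 0) : polar H (gradient H ξ) = 1 := by
  apply le_antisymm
  · refine polar_le _ fun η hη => ?_
    rw [div_le_one (hH.pos hη), real_inner_comm]
    exact hH.inner_gradient_le hξ η
  · have h_le := hH.inner_div_le_polar (gradient H ξ) hξ
    rwa [real_inner_comm, hH.inner_gradient_self hξ, div_self (hH.pos hξ).ne'] at h_le

theorem two_mul_kappa (hH : IsC2Norm H) :
    2 * kappa H = ∫ t in (-Real.pi)..Real.pi, (polar H (unitVec t) ^ 2)⁻¹ :=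
  two_mul_volume_setOf_lt_one hH.continuous_polar (fun _ => hH.polar_pos)
    fun _ hs v => polar_smul H v hs.le

theorem hasDerivAt_gradient_unitVec (hH : IsC2Norm H) (t : ℝ) :
    HasDerivAt (fun s => gradient H (unitVec s))
      ((hessian H (unitVec t)).trace • rot (unitVec t)) t := by
  have h_contDiffAt := hH.contDiffAt (unitVec_ne_zero t)
  rw [← toEuclideanCLM_rot (hessian_isSymm h_contDiffAt)
    (hH.hessian_apply_self (unitVec_ne_zero t))]
  exact (hasFDerivAt_gradient h_contDiffAt).comp_hasDerivAt t (hasDerivAt_unitVec t)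

theorem contDiff_gradient_unitVec (hH : IsC2Norm H) :
    ContDiff ℝ 1 fun t => gradient H (unitVec t) :=
  contDiff_iff_contDiffAt.2 fun t =>
    (contDiffAt_gradient ((hH.contDiffAt (unitVec_ne_zero t)).of_le
      one_add_one_eq_two.le)).comp t contDiff_unitVec.contDiffAt

theorem integral_mul_trace_hessian (hH : IsC2Norm H) :
    ∫ t in (-Real.pi)..Real.pi, H (unitVec t) * (hessian H (unitVec t)).trace = 2 * kappa H := by
  -- `‖x‖² / H^o(x)²` is `‖x‖²` on `∇H ∘ unitVec` and `H^o(x)⁻²` on the unit circle.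
  have h_change := integral_mul_inner_rot_deriv_div hH.contDiff_gradient_unitVec
    (fun t => (hH.pos (unitVec_ne_zero t)).trans_eq
      (hH.inner_gradient_self (unitVec_ne_zero t)).symm)
    (by simp only [unitVec_pi]) (F := fun x => ‖x‖ ^ 2 / polar H x ^ 2)
    ((continuous_norm.pow 2).continuousOn.div (hH.continuous_polar.pow 2).continuousOn
      fun x hx => (pow_pos (hH.polar_pos hx) 2).ne')
    fun s hs x => by
      rw [norm_smul, Real.norm_of_nonneg hs.le, polar_smul H x hs.le, mul_pow, mul_pow,
        mul_div_mul_left _ _ (pow_pos hs 2).ne']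
  simp only [norm_unitVec, one_pow, one_div, ← hH.two_mul_kappa] at h_change
  rw [← h_change]
  refine intervalIntegral.integral_congr fun t _ => ?_
  have h_norm : ‖gradient H (unitVec t)‖ ≠ 0 :=
    norm_ne_zero_iff.2 (hH.gradient_ne_zero (unitVec_ne_zero t))
  simp only [(hH.hasDerivAt_gradient_unitVec t).deriv, hH.polar_gradient (unitVec_ne_zero t),
    inner_smul_right, inner_rot_rot, hH.inner_gradient_self (unitVec_ne_zero t)]
  field_simp

end IsC2Norm

end Anisotropy

section GaussBonnet

variable {H φ : E2 → ℝ} {x₀ : E2}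

theorem IsC2Norm.norm_sq_mul_kH_neg (hH : IsC2Norm H) {x : E2} (hx : gradient φ x ≠ 0) :
    ‖gradient φ x‖ ^ 2 * kH H (fun y => -φ y) x = (hessian H (gradient φ x)).trace *
      ⟪rot (gradient φ x), Matrix.toEuclideanCLM (𝕜 := ℝ) (hessian φ x) (rot (gradient φ x))⟫ := by
  have h_even : hessian H (-gradient φ x) = hessian H (gradient φ x) := by
    simpa using hH.hessian_smul (neg_ne_zero.2 one_ne_zero) (gradient φ x)
  have h_kH : kH H (fun y => -φ y) x =
      ∑ i, ∑ j, hessian H (gradient φ x) i j * hessian φ x i j := by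
    simp only [kH, gradient_fun_neg, hessian_fun_neg, h_even, Matrix.neg_apply, mul_neg,
      Finset.sum_neg_distrib, neg_neg]
  rw [h_kH, norm_sq_mul_sum_mul, hH.hessian_apply_self hx,
    toEuclideanCLM_rot (hessian_isSymm (hH.contDiffAt hx)) (hH.hessian_apply_self hx),
    inner_zero_left, zero_add, real_inner_smul_left]

theorem IsC2Norm.norm_mul_kH_mul_eq (hH : IsC2Norm H) {x v : E2} (hx : gradient φ x ≠ 0)
    (hv : ⟪gradient φ x, v⟫ = 0) (hv_rot : 0 ≤ ⟪rot (gradient φ x), v⟫) :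
    ‖v‖ * (kH H (fun y => -φ y) x * H (‖gradient φ x‖⁻¹ • gradient φ x)) =
      H (gradient φ x) * (hessian H (gradient φ x)).trace *
        (⟪rot (gradient φ x), Matrix.toEuclideanCLM (𝕜 := ℝ) (hessian φ x) v⟫ /
          ‖gradient φ x‖ ^ 2) := by
  have h_kH := hH.norm_sq_mul_kH_neg hx
  have h_v := norm_sq_smul_eq_smul_rot hv
  set ξ := gradient φ x
  have h_pos : 0 < ‖ξ‖ := norm_pos_iff.2 hx
  have h_norm : ‖ξ‖ * ‖v‖ = ⟪rot ξ, v⟫ := by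
    have h := congrArg norm h_v
    rw [norm_smul, norm_smul, norm_rot, Real.norm_of_nonneg hv_rot, norm_pow, norm_norm] at h
    exact mul_right_cancel₀ h_pos.ne' (by linarith)
  have h_deriv : ‖ξ‖ ^ 2 * ⟪rot ξ, Matrix.toEuclideanCLM (𝕜 := ℝ) (hessian φ x) v⟫ =
      ⟪rot ξ, v⟫ * ⟪rot ξ, Matrix.toEuclideanCLM (𝕜 := ℝ) (hessian φ x) (rot ξ)⟫ := by
    rw [← real_inner_smul_right, ← map_smul, h_v, map_smul, real_inner_smul_right]
  rw [hH.homog, abs_of_pos (inv_pos.2 h_pos)]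
  refine mul_left_cancel₀ (pow_pos h_pos 4).ne' ?_
  calc ‖ξ‖ ^ 4 * (‖v‖ * (kH H (fun y => -φ y) x * (‖ξ‖⁻¹ * H ξ)))
      = ‖ξ‖ * ‖v‖ * H ξ * (‖ξ‖ ^ 2 * kH H (fun y => -φ y) x) := by field_simp
    _ = H ξ * (hessian H ξ).trace *
        (‖ξ‖ ^ 2 * ⟪rot ξ, Matrix.toEuclideanCLM (𝕜 := ℝ) (hessian φ x) v⟫) := by
        rw [h_kH, h_norm, h_deriv]
        ring
    _ = _ := by field_simp

theorem IsC2Norm.integral_norm_deriv_mul_kH (hH : IsC2Norm H) (hφ : ContDiff ℝ 2 φ) {γ : ℝ → E2}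
    (hγ : ContDiff ℝ 1 γ) (hzero : ∀ t, φ (γ t) = 0)
    (hpos : ∀ t, 0 < ⟪gradient φ (γ t), unitVec t⟫)
    (hccw : ∀ t, 0 ≤ ⟪rot (unitVec t), deriv γ t⟫) (hper : γ Real.pi = γ (-Real.pi)) :
    ∫ t in (-Real.pi)..Real.pi, ‖deriv γ t‖ * (kH H (fun y => -φ y) (γ t) *
      H (‖gradient φ (γ t)‖⁻¹ • gradient φ (γ t))) = 2 * kappa H := by
  have hγ' : ∀ t, HasDerivAt γ (deriv γ t) t := fun t =>
    (hγ.differentiable one_ne_zero t).hasDerivAt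
  have h_ne : ∀ t, gradient φ (γ t) ≠ 0 := fun t h_zero => by simpa [h_zero] using hpos t
  have h_normal : ContDiff ℝ 1 fun t => gradient φ (γ t) := contDiff_iff_contDiffAt.2 fun t =>
    (contDiffAt_gradient (hφ.contDiffAt.of_le one_add_one_eq_two.le)).comp t hγ.contDiffAt
  have h_deriv : ∀ t, deriv (fun t => gradient φ (γ t)) t =
      Matrix.toEuclideanCLM (𝕜 := ℝ) (hessian φ (γ t)) (deriv γ t) := fun t =>
    ((hasFDerivAt_gradient hφ.contDiffAt).comp_hasDerivAt t (hγ' t)).deriv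
  have h_tangent : ∀ t, ⟪gradient φ (γ t), deriv γ t⟫ = 0 := fun t => by
    rw [inner_gradient_left]
    refine ((hφ.differentiable two_ne_zero _).hasFDerivAt.comp_hasDerivAt t (hγ' t)).unique ?_
    exact (hasDerivAt_const t 0).congr_of_eventuallyEq (.of_forall hzero)
  have h_rot : ∀ t, 0 ≤ ⟪rot (gradient φ (γ t)), deriv γ t⟫ := fun t => by
    have h := congrArg (⟪rot (unitVec t), ·⟫) (norm_sq_smul_eq_smul_rot (h_tangent t))
    simp only [real_inner_smul_right, inner_rot_rot] at h
    rw [real_inner_comm _ (unitVec t)] at h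
    exact nonneg_of_mul_nonneg_left (h ▸ mul_nonneg (sq_nonneg _) (hccw t)) (hpos t)
  have h_change := integral_mul_inner_rot_deriv_div h_normal hpos (by rw [hper])
    (F := fun ξ => H ξ * (hessian H ξ).trace) hH.continuousOn_mul_trace_hessian
    fun s hs ξ => hH.mul_trace_hessian_smul hs ξ
  rw [← hH.integral_mul_trace_hessian, ← h_change]
  refine intervalIntegral.integral_congr fun t _ => ?_
  simp only [h_deriv]
  exact hH.norm_mul_kH_mul_eq (h_ne t) (h_tangent t) (h_rot t)

theorem aniso_gauss_bonnet_general (hH : IsC2Norm H) (hφ : ContDiff ℝ 2 φ) (hx₀ : φ x₀ < 0)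
    (hb : Bornology.IsBounded {x | φ x < 0})
    (htrans : ∀ x, φ x = 0 → 0 < fderiv ℝ φ x (x - x₀)) :
    ∫ x in {x | φ x = 0}, kH H (fun y => -φ y) x * H (‖gradient φ x‖⁻¹ • gradient φ x) ∂μH[1] =
      2 * kappa H := by
  obtain ⟨r, hr, hr_pos, h_radius⟩ := exists_contDiff_radius two_ne_zero hφ hx₀ hb htrans
    contDiff_unitVec unitVec_ne_zero
  set γ : ℝ → E2 := fun t => x₀ + r t • unitVec t with hγ_def
  have hγ : ContDiff ℝ 1 γ :=
    (contDiff_const.add (hr.smul contDiff_unitVec)).of_le one_le_two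
  have h_zero : ∀ t, φ (γ t) = 0 := fun t => (h_radius t _ (hr_pos t)).2 rfl
  have h_deriv : ∀ t, deriv γ t = r t • rot (unitVec t) + deriv r t • unitVec t := fun t =>
    (((hr.differentiable two_ne_zero t).hasDerivAt.smul (hasDerivAt_unitVec t)).const_add x₀).deriv
  have h_ccw : ∀ t, 0 ≤ ⟪rot (unitVec t), deriv γ t⟫ := fun t => by
    simp [h_deriv, inner_add_right, real_inner_smul_right, inner_rot_self, (hr_pos t).le]
  have h_outward : ∀ t, 0 < ⟪gradient φ (γ t), unitVec t⟫ := fun t => by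
    have h_radial := htrans (γ t) (h_zero t)
    rw [add_sub_cancel_left, map_smul, smul_eq_mul] at h_radial
    rw [inner_gradient_left]
    exact pos_of_mul_pos_right h_radial (hr_pos t).le
  have h_closed : γ Real.pi = γ (-Real.pi) := by
    have h_pi := h_zero Real.pi
    simp only [hγ_def, unitVec_pi] at h_pi ⊢
    rw [(h_radius _ _ (hr_pos _)).1 h_pi]
  have h_inj : InjOn γ (Ioc (-Real.pi) Real.pi) := fun s hs t ht h_eq =>
    injOn_smul_unitVec hr_pos hs ht (add_left_cancel h_eq)
  have h_image : γ '' Ioc (-Real.pi) Real.pi = {x | φ x = 0} :=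
    image_add_smul_unitVec_eq hx₀.ne hr_pos h_radius
  rw [← h_image, setIntegral_image_Ioc_hausdorffMeasure hγ h_inj,
    ← intervalIntegral.integral_of_le (by linarith [Real.pi_pos])]
  exact hH.integral_norm_deriv_mul_kH hφ hγ h_zero h_outward h_ccw h_closed

end GaussBonnet

/-- anisotropic Gauss–Bonnet: for a convex bounded open set `K ⊂ ℝ²` with
`C²` boundary, `∫_{∂K} k_H(x) H(ν(x)) dℋ¹(x) = 2κ`.  Here the boundary is described by a `C²`
defining function `φ` (so that `ν = ∇φ/|∇φ|` and the curvature `k_H` is computed from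
`v = -φ`, which is positive in `K`). -/
theorem aniso_gauss_bonnet
    (H : E2 → ℝ) (hH : IsAnisoNorm H)
    (K : Set E2) (hKo : IsOpen K) (hKb : Bornology.IsBounded K) (hKc : Convex ℝ K)
    (hKne : K.Nonempty)
    (φ : E2 → ℝ) (hφ : ContDiff ℝ 2 φ) (hKφ : K = {x | φ x < 0})
    (hfr : frontier K = {x | φ x = 0})
    (hgrad : ∀ x ∈ frontier K, gradient φ x ≠ 0) :
    ∫ x in frontier K,
        kH H (fun y => -φ y) x * H (‖gradient φ x‖⁻¹ • gradient φ x)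
        ∂(μH[1] : Measure E2)
      = 2 * kappa H := by
  subst hKφ
  obtain ⟨x₀, hx₀⟩ := hKne
  rw [hfr]
  refine aniso_gauss_bonnet_general hH.isC2Norm hφ hx₀ hKb fun x hx => ?_
  have h_frontier : x ∈ frontier {x | φ x < 0} := hfr ▸ hx
  have h_max : IsMaxOn φ (closure {x | φ x < 0}) x := fun y hy =>
    (closure_lt_subset_le hφ.continuous continuous_const hy : φ y ≤ 0).trans_eq hx.symm
  refine fderiv_apply_sub_pos_of_isMaxOn hKc.closure h_frontier.1 h_max
    (hφ.differentiable two_ne_zero x).hasFDerivAt (fun h_zero => hgrad x h_frontier ?_)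
    (interior_mono subset_closure (hKo.interior_eq.symm ▸ hx₀))
  rw [gradient, h_zero, map_zero]
end
end

section
/- Let Ω ⊂ ℝ² be a bounded convex open set with C² boundary and let u ∈ Φ₀(Ω) ∩ C²(E_u). Then the rearrangement u^♦ of u with respect to the anisotropic perimeter belongs to C^{0,1}((0, P_H(Ω)]), and there exists a positive constant C > 0 such that 0 ≤ -(u^♦)'(s) ≤ C for every s ∈ (0, P_H(Ω)]; in fact one may take C = β · max_{Ω̄}|∇u| / (2κ), where β is any constant with H(ξ) ≤ β|ξ| for all ξ. -/
open MeasureTheory Set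
open scoped ENNReal NNReal RealInnerProductSpace

noncomputable section

/-! By the classical zonoid representation of planar norms, `H x` is the average of
`|⟪x, dir (ψ + π / 2)⟫|` over `ψ`, with weight a quarter of the radius of curvature `h + h''` of the
Wulff shape, `h` being its support function. Since the level curves of a concave `u` are convex,
projecting them orthogonally to a line covers the shadow of `{u > t}` exactly twice; hence
`λ_H(t)` is twice the average length of the shadows of `{u > t}`.

With `M = max |∇u|`, the set `{u > a}` contains a ball of radius `(b - a) / M` around each point
of `{u > b}`, so every shadow grows by `2 (b - a) / M` and `λ_H(a) - λ_H(b) ≥ ((b - a) / M) ∫ h`.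
Finally `2 κ ≤ ∫ h² ≤ β ∫ h` bounds `∫ h` below, and the drop of `λ_H` becomes the Lipschitz bound
for its generalized inverse `u^♦`. -/

section MetricAreaFormula

variable {X Y : Type*} [MetricSpace X] [MetricSpace Y]

/-- `f` has metric derivative `c` at `x` along `S`, strictly: `dist (f y) (f z)` is
`c * dist y z + o(dist y z)` as `y` and `z` tend to `x` independently within `S`. -/
def HasStrictMetricDerivWithinAt (f : X → Y) (c : ℝ) (S : Set X) (x : X) : Prop :=
  (fun p : X × X => dist (f p.1) (f p.2) - c * dist p.1 p.2) =o[nhdsWithin x S ×ˢ nhdsWithin x S]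
    fun p => dist p.1 p.2

variable {f : X → Y} {S : Set X} {c ε : ℝ} {x : X}

theorem hasStrictMetricDerivWithinAt_iff :
    HasStrictMetricDerivWithinAt f c S x ↔ ∀ ε > 0, ∃ U ∈ nhdsWithin x S, ∀ y ∈ U, ∀ z ∈ U,
      |dist (f y) (f z) - c * dist y z| ≤ ε * dist y z := by
  simp only [HasStrictMetricDerivWithinAt, Asymptotics.isLittleO_iff, Filter.eventually_iff,
    Filter.mem_prod_self_iff, prod_subset_iff, mem_ofPred_eq, Real.norm_eq_abs, abs_dist, gt_iff_lt]

theorem HasStrictMetricDerivWithinAt.continuousWithinAt (h : HasStrictMetricDerivWithinAt f c S x)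
    (hx : x ∈ S) : ContinuousWithinAt f S x := by
  obtain ⟨U, hU, hfU⟩ := hasStrictMetricDerivWithinAt_iff.1 h 1 one_pos
  have hlim : Filter.Tendsto (fun y => (c + 1) * dist y x) (nhdsWithin x S) (nhds 0) := by
    have : ContinuousWithinAt (fun y => (c + 1) * dist y x) S x := by fun_prop
    simpa [ContinuousWithinAt] using this
  refine tendsto_iff_dist_tendsto_zero.2 (squeeze_zero' (.of_forall fun _ => dist_nonneg) ?_ hlim)
  filter_upwards [hU] with y hy
  have := (abs_le.1 (hfU y hy x (mem_of_mem_nhdsWithin hx hU))).2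
  linarith

theorem exists_measurable_partition_of_nhdsWithin [SecondCountableTopology X] [MeasurableSpace X]
    [OpensMeasurableSpace X] {P : Set X → Prop} (hS : MeasurableSet S) (empty : P ∅)
    (mono : ∀ ⦃A B⦄, A ⊆ B → P B → P A) (nhds : ∀ x ∈ S, ∃ U ∈ nhdsWithin x S, P U) :
    ∃ A : ℕ → Set X, (∀ n, MeasurableSet (A n)) ∧ Pairwise (Function.onFun Disjoint A) ∧
      ⋃ n, A n = S ∧ ∀ n, P (A n) := by
  have open_nhds : ∀ x, ∃ V : Set X, IsOpen V ∧ P (V ∩ S) ∧ (x ∈ S → x ∈ V) := by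
    intro x
    by_cases hx : x ∈ S
    · obtain ⟨U, hU, hPU⟩ := nhds x hx
      obtain ⟨V, hVo, hxV, hVU⟩ := mem_nhdsWithin.1 hU
      exact ⟨V, hVo, mono hVU hPU, fun _ => hxV⟩
    · exact ⟨∅, isOpen_empty, by simpa using empty, fun h => absurd h hx⟩
  choose V hVo hPV hxV using open_nhds
  obtain ⟨T, -, hTc, hST⟩ := TopologicalSpace.countable_cover_nhdsWithin (f := V) (s := S)
    fun x hx => mem_nhdsWithin_of_mem_nhds ((hVo x).mem_nhds (hxV x hx))
  rcases T.eq_empty_or_nonempty with rfl | hT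
  · refine ⟨fun _ => ∅, fun _ => .empty, fun _ _ _ => disjoint_bot_left, ?_, fun _ => empty⟩
    simpa [eq_comm, subset_empty_iff] using hST
  · obtain ⟨x, rfl⟩ := hTc.exists_eq_range hT
    refine ⟨fun n => disjointed (V ∘ x) n ∩ S, fun n => ?_, fun m n hmn => ?_, ?_, fun n => ?_⟩
    · exact (MeasurableSet.disjointed (fun m => (hVo (x m)).measurableSet) n).inter hS
    · exact (disjoint_disjointed _ hmn).mono inter_subset_left inter_subset_left
    · rw [← iUnion_inter, iUnion_disjointed, inter_eq_right]
      simpa [biUnion_range] using hST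
    · exact mono (inter_subset_inter_left S (disjointed_subset _ _)) (hPV (x n))

variable [MeasurableSpace X] [BorelSpace X] [MeasurableSpace Y] [BorelSpace Y]

theorem ofReal_mul_hausdorffMeasure_le_image {A : Set X}
    (h : ∀ y ∈ A, ∀ z ∈ A, c * dist y z ≤ dist (f y) (f z)) :
    ENNReal.ofReal c * μH[1] A ≤ μH[1] (f '' A) := by
  rcases le_or_gt c 0 with hc | hc
  · simp [ENNReal.ofReal_of_nonpos hc]
  have hanti : AntilipschitzWith (Real.toNNReal c)⁻¹ (A.domRestrict f) :=
    .of_le_mul_dist fun y z => by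
      rw [NNReal.coe_inv, Real.coe_toNNReal _ hc.le, inv_mul_eq_div, le_div_iff₀ hc, mul_comm]
      exact h y y.2 z z.2
  have hle := hanti.le_hausdorffMeasure_image zero_le_one univ
  rw [image_univ, range_domRestrict, ENNReal.rpow_one,
    ← isometry_subtype_coe.hausdorffMeasure_image (.inl zero_le_one), image_univ,
    Subtype.range_coe, ENNReal.coe_inv (by simpa using hc)] at hle
  calc ENNReal.ofReal c * μH[1] A
      ≤ ENNReal.ofReal c * ((ENNReal.ofReal c)⁻¹ * μH[1] (f '' A)) := by gcongr; exact hle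
    _ = μH[1] (f '' A) := by
      rw [← mul_assoc, ENNReal.mul_inv_cancel (by simpa using hc) ENNReal.ofReal_ne_top, one_mul]

theorem hausdorffMeasure_image_le_ofReal_mul {A : Set X}
    (h : ∀ y ∈ A, ∀ z ∈ A, dist (f y) (f z) ≤ c * dist y z) :
    μH[1] (f '' A) ≤ ENNReal.ofReal c * μH[1] A := by
  have hlip : LipschitzOnWith (Real.toNNReal c) f A :=
    .of_dist_le_mul fun y hy z hz => (h y hy z hz).trans <|
      mul_le_mul_of_nonneg_right (Real.le_coe_toNNReal c) dist_nonneg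
  exact (hlip.hausdorffMeasure_image_le zero_le_one).trans_eq (by rw [ENNReal.rpow_one]; rfl)

theorem setLIntegral_le_hausdorffMeasure_image_add {g : X → ℝ} {A : Set X} (hA : MeasurableSet A)
    (hf : ∀ y ∈ A, ∀ z ∈ A, |dist (f y) (f z) - c * dist y z| ≤ ε * dist y z)
    (hg : ∀ y ∈ A, |g y - c| ≤ ε) :
    ∫⁻ x in A, ENNReal.ofReal (g x) ∂μH[1] ≤
      μH[1] (f '' A) + ENNReal.ofReal (2 * ε) * μH[1] A := by
  have hlower : ENNReal.ofReal (c - ε) * μH[1] A ≤ μH[1] (f '' A) :=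
    ofReal_mul_hausdorffMeasure_le_image fun y hy z hz => by
      linarith [(abs_le.1 (hf y hy z hz)).1]
  calc ∫⁻ x in A, ENNReal.ofReal (g x) ∂μH[1]
      ≤ ∫⁻ _ in A, (ENNReal.ofReal (c - ε) + ENNReal.ofReal (2 * ε)) ∂μH[1] := by
        refine setLIntegral_mono' hA fun y hy => le_trans ?_ ENNReal.ofReal_add_le
        exact ENNReal.ofReal_le_ofReal (by linarith [(abs_le.1 (hg y hy)).2])
    _ ≤ μH[1] (f '' A) + ENNReal.ofReal (2 * ε) * μH[1] A := by
        rw [setLIntegral_const, add_mul]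
        gcongr

theorem hausdorffMeasure_image_le_setLIntegral_add {g : X → ℝ} {A : Set X} (hA : MeasurableSet A)
    (hf : ∀ y ∈ A, ∀ z ∈ A, |dist (f y) (f z) - c * dist y z| ≤ ε * dist y z)
    (hg : ∀ y ∈ A, |g y - c| ≤ ε) :
    μH[1] (f '' A) ≤
      ∫⁻ x in A, ENNReal.ofReal (g x) ∂μH[1] + ENNReal.ofReal (2 * ε) * μH[1] A := by
  calc μH[1] (f '' A)
      ≤ ENNReal.ofReal (c + ε) * μH[1] A :=
        hausdorffMeasure_image_le_ofReal_mul fun y hy z hz => by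
          linarith [(abs_le.1 (hf y hy z hz)).2]
    _ ≤ ∫⁻ x in A, (ENNReal.ofReal (g x) + ENNReal.ofReal (2 * ε)) ∂μH[1] := by
        rw [← setLIntegral_const]
        refine setLIntegral_mono' hA fun y hy => le_trans ?_ ENNReal.ofReal_add_le
        exact ENNReal.ofReal_le_ofReal (by linarith [(abs_le.1 (hg y hy)).1])
    _ = _ := by rw [lintegral_add_right _ measurable_const, setLIntegral_const]

theorem le_of_forall_pos_le_add_ofReal_mul {a b m : ℝ≥0∞} (hm : m ≠ ∞)
    (h : ∀ ε : ℝ, 0 < ε → a ≤ b + ENNReal.ofReal ε * m) : a ≤ b := by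
  have hlim : Filter.Tendsto (fun ε : ℝ => b + ENNReal.ofReal ε * m) (nhdsWithin 0 (Ioi 0))
      (nhds (b + ENNReal.ofReal 0 * m)) :=
    (tendsto_const_nhds.add (ENNReal.Tendsto.mul_const (ENNReal.continuous_ofReal.tendsto 0)
      (.inr hm))).mono_left nhdsWithin_le_nhds
  simp only [ENNReal.ofReal_zero, zero_mul, add_zero] at hlim
  exact ge_of_tendsto hlim (eventually_mem_nhdsWithin.mono h)

theorem setLIntegral_eq_hausdorffMeasure_image [PolishSpace X] {g : X → ℝ} (hS : MeasurableSet S)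
    (hfin : μH[1] S ≠ ∞) (hinj : InjOn f S) (hg : ContinuousOn g S)
    (hf : ∀ x ∈ S, HasStrictMetricDerivWithinAt f (g x) S x) :
    ∫⁻ x in S, ENNReal.ofReal (g x) ∂μH[1] = μH[1] (f '' S) := by
  have hfc : ContinuousOn f S := fun x hx => (hf x hx).continuousWithinAt hx
  have key : ∀ ε : ℝ, 0 < ε →
      ∫⁻ x in S, ENNReal.ofReal (g x) ∂μH[1] ≤ μH[1] (f '' S) + ENNReal.ofReal ε * μH[1] S ∧
      μH[1] (f '' S) ≤ ∫⁻ x in S, ENNReal.ofReal (g x) ∂μH[1] + ENNReal.ofReal ε * μH[1] S := by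
    intro ε hε
    obtain ⟨A, hAm, hAd, rfl, hA⟩ := exists_measurable_partition_of_nhdsWithin
      (P := fun A => ∃ c, (∀ y ∈ A, ∀ z ∈ A, |dist (f y) (f z) - c * dist y z| ≤ ε / 2 * dist y z) ∧
        ∀ y ∈ A, |g y - c| ≤ ε / 2) hS (by simp)
      (fun A B hAB ⟨c, hfc, hgc⟩ => ⟨c, fun y hy z hz => hfc y (hAB hy) z (hAB hz),
        fun y hy => hgc y (hAB hy)⟩)
      fun x hx => by
        obtain ⟨U, hU, hfU⟩ := hasStrictMetricDerivWithinAt_iff.1 (hf x hx) (ε / 2) (half_pos hε)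
        have hgU := Metric.tendsto_nhds.1 (hg x hx) (ε / 2) (half_pos hε)
        exact ⟨_, Filter.inter_mem hU hgU, g x, fun y hy z hz => hfU y hy.1 z hz.1,
          fun y hy => hy.2.le⟩
    have himage : μH[1] (f '' ⋃ n, A n) = ∑' n, μH[1] (f '' A n) := by
      rw [image_iUnion]
      refine measure_iUnion (fun m n hmn => ?_) fun n => ?_
      · refine disjoint_image_image fun y hy z hz hyz => (hAd hmn).ne_of_mem hy hz ?_
        exact hinj (mem_iUnion_of_mem m hy) (mem_iUnion_of_mem n hz) hyz
      · exact (hAm n).image_of_continuousOn_injOn (hfc.mono (subset_iUnion A n))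
          (hinj.mono (subset_iUnion A n))
    rw [himage, lintegral_iUnion hAm hAd, measure_iUnion hAd hAm, ← ENNReal.tsum_mul_left,
      ← ENNReal.tsum_add, ← ENNReal.tsum_add]
    choose c hfc hgc using hA
    rw [← mul_div_cancel₀ ε two_ne_zero]
    exact ⟨ENNReal.tsum_le_tsum fun n =>
        setLIntegral_le_hausdorffMeasure_image_add (hAm n) (hfc n) (hgc n),
      ENNReal.tsum_le_tsum fun n =>
        hausdorffMeasure_image_le_setLIntegral_add (hAm n) (hfc n) (hgc n)⟩
  exact le_antisymm (le_of_forall_pos_le_add_ofReal_mul hfin fun ε hε => (key ε hε).1)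
    (le_of_forall_pos_le_add_ofReal_mul hfin fun ε hε => (key ε hε).2)

end MetricAreaFormula

section RealLine

theorem deriv_deriv_nonneg_of_isLocalMin {g : ℝ → ℝ} {a : ℝ} (h : IsLocalMin g a)
    (hg : ContinuousAt g a) : 0 ≤ deriv (deriv g) a := by
  by_contra! hneg
  have hmax := isLocalMax_of_deriv_deriv_neg hneg h.deriv_eq_zero hg
  have hconst : g =ᶠ[nhds a] fun _ => g a := by
    filter_upwards [h, hmax] with x hmin hmax using le_antisymm hmax hmin
  simp [hconst.deriv.deriv_eq] at hneg

variable {h : ℝ → ℝ}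

theorem continuous_deriv_deriv (hh : ContDiff ℝ 2 h) : Continuous (deriv (deriv h)) := by
  have := hh.iterate_deriv' 0 2
  exact this.continuous

theorem integral_sin_sub_mul_add_deriv_deriv (hh : ContDiff ℝ 2 h) (φ : ℝ) :
    ∫ ψ in φ..φ + Real.pi, Real.sin (ψ - φ) * (h ψ + deriv (deriv h) ψ) =
      h φ + h (φ + Real.pi) := by
  have hd : Differentiable ℝ h := hh.differentiable two_ne_zero
  have hdd : Differentiable ℝ (deriv h) := hh.differentiable_deriv_two
  have hderiv : ∀ ψ, HasDerivAt
      (fun ψ => Real.sin (ψ - φ) * deriv h ψ - Real.cos (ψ - φ) * h ψ)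
      (Real.sin (ψ - φ) * (h ψ + deriv (deriv h) ψ)) ψ := fun ψ => by
    have hsub := (hasDerivAt_id' ψ).sub_const φ
    exact ((hsub.sin.mul (hdd ψ).hasDerivAt).sub (hsub.cos.mul (hd ψ).hasDerivAt)).congr_deriv
      (by ring)
  have hcont : Continuous fun ψ => Real.sin (ψ - φ) * (h ψ + deriv (deriv h) ψ) := by
    have := continuous_deriv_deriv hh
    have := hh.continuous
    fun_prop
  rw [intervalIntegral.integral_eq_sub_of_hasDerivAt (fun ψ _ => hderiv ψ)
    (hcont.intervalIntegrable ..)]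
  simp [add_comm]

theorem periodic_deriv {T : ℝ} (hT : Function.Periodic h T) : Function.Periodic (deriv h) T :=
  fun x => by rw [← deriv_comp_add_const, funext hT]

theorem integral_abs_sin_sub_mul_add_deriv_deriv (hh : ContDiff ℝ 2 h)
    (hT : Function.Periodic h Real.pi) (φ : ℝ) :
    ∫ ψ in -Real.pi..Real.pi, |Real.sin (ψ - φ)| * (h ψ + deriv (deriv h) ψ) = 4 * h φ := by
  let F : ℝ → ℝ := fun ψ => |Real.sin (ψ - φ)| * (h ψ + deriv (deriv h) ψ)
  have hper : Function.Periodic F Real.pi := fun ψ => by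
    simp only [F, add_sub_right_comm, Real.sin_add_pi, abs_neg, hT ψ,
      periodic_deriv (periodic_deriv hT) ψ]
  have hcont : Continuous F := by
    have := continuous_deriv_deriv hh
    have := hh.continuous
    fun_prop
  have half : ∀ a b, b = a + Real.pi → ∫ ψ in a..b, F ψ = 2 * h φ := by
    rintro a _ rfl
    calc ∫ ψ in a..a + Real.pi, F ψ = ∫ ψ in φ..φ + Real.pi, F ψ :=
          hper.intervalIntegral_add_eq a φ
      _ = ∫ ψ in φ..φ + Real.pi, Real.sin (ψ - φ) * (h ψ + deriv (deriv h) ψ) := by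
          refine intervalIntegral.integral_congr fun ψ hψ => ?_
          rw [uIcc_of_le (by linarith [Real.pi_pos])] at hψ
          simp only [F, abs_of_nonneg (Real.sin_nonneg_of_nonneg_of_le_pi
            (sub_nonneg.2 hψ.1) (sub_le_iff_le_add'.2 hψ.2))]
      _ = 2 * h φ := by rw [integral_sin_sub_mul_add_deriv_deriv hh, hT]; ring
  rw [← intervalIntegral.integral_add_adjacent_intervals (b := 0)
    (hcont.intervalIntegrable ..) (hcont.intervalIntegrable ..), half _ _ (by simp),
    half _ _ (by simp)]
  ring

theorem integral_add_deriv_deriv (hh : ContDiff ℝ 2 h) {a b : ℝ}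
    (hT : Function.Periodic h (b - a)) :
    ∫ ψ in a..b, (h ψ + deriv (deriv h) ψ) = ∫ ψ in a..b, h ψ := by
  have hcont := continuous_deriv_deriv hh
  have hab : deriv h b = deriv h a := by simpa using periodic_deriv hT a
  rw [intervalIntegral.integral_add (hh.continuous.intervalIntegrable ..)
    (hcont.intervalIntegrable ..),
    intervalIntegral.integral_deriv_eq_sub (fun ψ _ => hh.differentiable_deriv_two ψ)
      (hcont.intervalIntegrable ..), hab, sub_self, add_zero]

open scoped Pointwise in
theorem volume_add_ofReal_le_volume_add_Icc {A : Set ℝ} (hA : A.Nonempty) {δ : ℝ} (hδ : 0 ≤ δ) :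
    volume A + ENNReal.ofReal (2 * δ) ≤ volume (A + Icc (-δ) δ) := by
  obtain ⟨c, hc⟩ := hA
  set B := A + Icc (-δ) δ
  have hleft : A ∩ Iio c ⊆ (· + -δ) ⁻¹' (B ∩ Iio (c - δ)) := fun x hx =>
    ⟨add_mem_add hx.1 (by simpa using hδ), by simpa [sub_eq_add_neg] using hx.2⟩
  have hright : A \ Iio c ⊆ (· + δ) ⁻¹' ((B \ Iio (c - δ)) \ Iio (c + δ)) := fun x hx => by
    have hcx : c ≤ x := not_lt.1 hx.2
    refine ⟨⟨add_mem_add hx.1 (by simpa using hδ), ?_⟩, ?_⟩ <;> rw [mem_Iio, not_lt] <;> linarith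
  have hmid : Ico (c - δ) (c + δ) ⊆ (B \ Iio (c - δ)) ∩ Iio (c + δ) := fun x hx =>
    ⟨⟨⟨c, hc, x - c, ⟨by linarith [hx.1], by linarith [hx.2]⟩, by simp⟩, not_lt.2 hx.1⟩, hx.2⟩
  calc volume A + ENNReal.ofReal (2 * δ)
      = volume (A ∩ Iio c) + (volume (Ico (c - δ) (c + δ)) + volume (A \ Iio c)) := by
        rw [← measure_inter_add_sdiff A measurableSet_Iio, Real.volume_Ico, add_assoc,
          add_comm (volume (A \ Iio c))]
        ring_nf
    _ ≤ volume (B ∩ Iio (c - δ)) + (volume ((B \ Iio (c - δ)) ∩ Iio (c + δ)) +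
          volume ((B \ Iio (c - δ)) \ Iio (c + δ))) := by
        gcongr ?_ + (volume ?_ + ?_)
        · exact (measure_mono hleft).trans_eq (measure_preimage_add_right ..)
        · exact (measure_mono hright).trans_eq (measure_preimage_add_right ..)
    _ = volume B := by
        rw [measure_inter_add_sdiff _ measurableSet_Iio,
          measure_inter_add_sdiff _ measurableSet_Iio]

/-- The generalized inverse `s ↦ sup {t ≥ 0 : s ≤ l t}` of a decreasing function `l` on `[0, ∞)`. -/
def genInverse (l : ℝ → ℝ) (s : ℝ) : ℝ := sSup {t | 0 ≤ t ∧ s ≤ l t}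

variable {l : ℝ → ℝ} {C : ℝ≥0}

theorem bddAbove_setOf_le_of_forall_sub_le {s : ℝ} (hs : 0 < s)
    (hl : ∀ a b, 0 < a → a < b → 0 < l b → b - a ≤ C * (l a - l b)) :
    BddAbove {t | 0 ≤ t ∧ s ≤ l t} := by
  refine ⟨1 + C * |l 1|, fun t ⟨_, hst⟩ => ?_⟩
  rcases le_or_gt t 1 with ht | ht
  · have : 0 ≤ C * |l 1| := by positivity
    linarith
  · have hlt : 0 < l t := hs.trans_le hst
    have hC : C * (l 1 - l t) ≤ C * |l 1| := by
      gcongr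
      linarith [le_abs_self (l 1)]
    linarith [hl 1 t one_pos ht hlt]

theorem antitoneOn_genInverse
    (hl : ∀ a b, 0 < a → a < b → 0 < l b → b - a ≤ C * (l a - l b)) :
    AntitoneOn (genInverse l) (Ioc 0 (l 0)) := fun _ hs _ hs' hss' =>
  csSup_le_csSup (bddAbove_setOf_le_of_forall_sub_le hs.1 hl) ⟨0, le_rfl, hs'.2⟩
    fun _ ht => ⟨ht.1, hss'.trans ht.2⟩

theorem lipschitzOnWith_genInverse
    (hl : ∀ a b, 0 < a → a < b → 0 < l b → b - a ≤ C * (l a - l b)) :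
    LipschitzOnWith C (genInverse l) (Ioc 0 (l 0)) := by
  refine LipschitzOnWith.of_le_add_mul C fun s hs s' hs' => ?_
  have hdist : 0 ≤ C * dist s s' := by positivity
  have le_genInverse : ∀ t, 0 ≤ t → s' ≤ l t → t ≤ genInverse l s' := fun t ht hlt =>
    le_csSup (bddAbove_setOf_le_of_forall_sub_le hs'.1 hl) ⟨ht, hlt⟩
  have hnonneg := le_genInverse 0 le_rfl hs'.2
  refine csSup_le ⟨0, le_rfl, hs.2⟩ fun t ⟨_, hst⟩ => ?_
  by_contra! hlt
  obtain ⟨t', hat', ht't⟩ : ∃ t', genInverse l s' < t' ∧ t' < t - C * dist s s' :=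
    exists_between (by linarith)
  have hlt' : l t' < s' := lt_of_not_ge fun h => hat'.not_ge (le_genInverse t' (by linarith) h)
  have hdrop := hl t' t (by linarith) (by linarith) (hs.1.trans_le hst)
  have hC : C * (l t' - l t) ≤ C * dist s s' := by
    gcongr
    linarith [neg_abs_le (s - s'), Real.dist_eq s s']
  linarith

end RealLine

section Plane

/-- The unit vector at angle `θ`; the direction normal to it is `dir (θ + π / 2)`. -/
def dir (θ : ℝ) : E2 := !₂[Real.cos θ, Real.sin θ]

theorem inner_dir_dir (a b : ℝ) : ⟪dir a, dir b⟫ = Real.cos (a - b) := by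
  simp [dir, PiLp.inner_apply, Real.cos_sub, mul_comm]

theorem norm_dir (θ : ℝ) : ‖dir θ‖ = 1 := by
  rw [norm_eq_sqrt_real_inner, inner_dir_dir, sub_self, Real.cos_zero, Real.sqrt_one]

theorem dir_ne_zero (θ : ℝ) : dir θ ≠ 0 := norm_ne_zero_iff.1 (by simp [norm_dir])

theorem dir_add_pi (θ : ℝ) : dir (θ + Real.pi) = -dir θ := by
  ext i; fin_cases i <;> simp [dir]

theorem contDiff_dir {n : WithTop ℕ∞} : ContDiff ℝ n dir := by
  refine contDiff_euclidean.2 fun i => ?_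
  fin_cases i
  exacts [Real.contDiff_cos, Real.contDiff_sin]

theorem continuous_dir : Continuous dir := (contDiff_dir (n := 0)).continuous

theorem dir_add_smul_dir (a b : ℝ) :
    dir (a + b) + dir (a - b) = (2 * Real.cos b) • dir a := by
  ext i
  fin_cases i <;> simp [dir, Real.cos_add, Real.cos_sub, Real.sin_add, Real.sin_sub] <;> ring

theorem eq_inner_smul_dir_add (ψ : ℝ) (w : E2) :
    w = ⟪dir ψ, w⟫ • dir ψ + ⟪dir (ψ + Real.pi / 2), w⟫ • dir (ψ + Real.pi / 2) := by
  ext i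
  fin_cases i <;>
    simp [dir, PiLp.inner_apply, Real.cos_add_pi_div_two, Real.sin_add_pi_div_two]
  · linear_combination -(w 0) * Real.sin_sq_add_cos_sq ψ
  · linear_combination -(w 1) * Real.sin_sq_add_cos_sq ψ

theorem repr_polarCoord_symm (q : ℝ × ℝ) :
    Complex.orthonormalBasisOneI.repr (Complex.polarCoord.symm q) = q.1 • dir q.2 := by
  ext i
  fin_cases i <;> simp [dir, Complex.cos_ofReal_re, Complex.sin_ofReal_re]

theorem exists_eq_norm_smul_dir (x : E2) : ∃ φ, x = ‖x‖ • dir φ := by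
  let f := Complex.orthonormalBasisOneI.repr
  refine ⟨(f.symm x).arg, ?_⟩
  have hpolar : Complex.polarCoord.symm (‖x‖, (f.symm x).arg) = f.symm x := by
    rw [Complex.polarCoord_symm_apply, ← f.symm.norm_map]
    exact_mod_cast Complex.norm_mul_cos_add_sin_mul_I (f.symm x)
  rw [← repr_polarCoord_symm (‖x‖, _), hpolar, f.apply_symm_apply]

theorem lintegral_eq_lintegral_smul_dir (F : E2 → ℝ≥0∞) :
    ∫⁻ x, F x = ∫⁻ q in Ioi (0 : ℝ) ×ˢ Ioo (-Real.pi) Real.pi,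
      ENNReal.ofReal q.1 * F (q.1 • dir q.2) := by
  let f := Complex.orthonormalBasisOneI.repr
  rw [← f.measurePreserving.lintegral_comp_emb f.toMeasurableEquiv.measurableEmbedding,
    ← Complex.lintegral_comp_polarCoord_symm]
  simp only [f, repr_polarCoord_symm, smul_eq_mul]
  rfl

end Plane

section Wulff

variable {p : Seminorm ℝ E2} {α β : ℝ}

/-- The support function of the Wulff shape of `p`, as a function of the angle of the normal. -/
def angularSupport (p : Seminorm ℝ E2) (θ : ℝ) : ℝ := p (dir θ)

theorem periodic_angularSupport : Function.Periodic (angularSupport p) Real.pi := fun θ => by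
  simp [angularSupport, dir_add_pi]

theorem contDiff_angularSupport (hp : ContDiffOn ℝ 2 p {0}ᶜ) : ContDiff ℝ 2 (angularSupport p) :=
  hp.comp_contDiff contDiff_dir dir_ne_zero

/-- The radius of curvature of the boundary of the Wulff shape of `p` at the point whose normal
has angle `θ`. -/
def wulffRadius (p : Seminorm ℝ E2) (θ : ℝ) : ℝ :=
  angularSupport p θ + deriv (deriv (angularSupport p)) θ

theorem continuous_wulffRadius (hp : ContDiffOn ℝ 2 p {0}ᶜ) : Continuous (wulffRadius p) :=
  (contDiff_angularSupport hp).continuous.add (continuous_deriv_deriv (contDiff_angularSupport hp))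

theorem two_mul_cos_mul_le_angularSupport_add (θ δ : ℝ) :
    2 * Real.cos δ * angularSupport p θ ≤ angularSupport p (θ + δ) + angularSupport p (θ - δ) :=
  calc 2 * Real.cos δ * angularSupport p θ ≤ p ((2 * Real.cos δ) • dir θ) := by
        rw [map_smul_eq_mul]
        exact mul_le_mul_of_nonneg_right (le_abs_self _) (apply_nonneg p _)
    _ = p (dir (θ + δ) + dir (θ - δ)) := by rw [dir_add_smul_dir]
    _ ≤ _ := map_add_le_add p _ _

theorem wulffRadius_nonneg (hp : ContDiffOn ℝ 2 p {0}ᶜ) (θ : ℝ) : 0 ≤ wulffRadius p θ := by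
  let h := angularSupport p
  let g : ℝ → ℝ := fun δ => h (θ + δ) + h (θ - δ) - 2 * Real.cos δ * h θ
  have hmin : IsLocalMin g 0 := .of_forall fun δ => by
    simpa [g, ← two_mul] using two_mul_cos_mul_le_angularSupport_add θ δ
  have hh := contDiff_angularSupport hp
  have hd : Differentiable ℝ h := hh.differentiable two_ne_zero
  have hdd : Differentiable ℝ (deriv h) := hh.differentiable_deriv_two
  have hg : ∀ δ, HasDerivAt g
      (deriv h (θ + δ) - deriv h (θ - δ) + 2 * Real.sin δ * h θ) δ := fun δ =>
    ((((hd (θ + δ)).hasDerivAt.comp_const_add θ δ).add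
      ((hd (θ - δ)).hasDerivAt.comp_const_sub θ δ)).sub
      (((Real.hasDerivAt_cos δ).const_mul 2).mul_const (h θ))).congr_deriv (by ring)
  have hgg : HasDerivAt (deriv g) (2 * wulffRadius p θ) 0 := by
    rw [funext fun δ => (hg δ).deriv]
    refine ((((hdd (θ + 0)).hasDerivAt.comp_const_add θ 0).sub
      ((hdd (θ - 0)).hasDerivAt.comp_const_sub θ 0)).add
      (((Real.hasDerivAt_sin 0).const_mul 2).mul_const (h θ))).congr_deriv ?_
    simp only [wulffRadius, h, add_zero, sub_zero, Real.cos_zero]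
    ring
  have := hgg.deriv ▸ deriv_deriv_nonneg_of_isLocalMin hmin (hg 0).continuousAt
  linarith

/-- The measure with density `wulffRadius p / 4` on the angles of one full turn. It represents `p`
as an average of the functions `x ↦ |⟪x, dir (ψ + π / 2)⟫|`, see
`lintegral_abs_inner_zonoidMeasure`. -/
def zonoidMeasure (p : Seminorm ℝ E2) : Measure ℝ :=
  (volume.restrict (Ioc (-Real.pi) Real.pi)).withDensity
    fun ψ => ENNReal.ofReal (wulffRadius p ψ / 4)

theorem lintegral_ofReal_zonoidMeasure (hp : ContDiffOn ℝ 2 p {0}ᶜ) {f : ℝ → ℝ}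
    (hf : Continuous f) (hf0 : ∀ ψ, 0 ≤ f ψ) :
    ∫⁻ ψ, ENNReal.ofReal (f ψ) ∂zonoidMeasure p =
      ENNReal.ofReal (1 / 4 * ∫ ψ in -Real.pi..Real.pi, f ψ * wulffRadius p ψ) := by
  have hr := continuous_wulffRadius hp
  have hr0 := wulffRadius_nonneg hp
  rw [zonoidMeasure, lintegral_withDensity_eq_lintegral_mul _ (by fun_prop) (by fun_prop),
    ← intervalIntegral.integral_const_mul,
    intervalIntegral.integral_of_le (by linarith [Real.pi_pos]),
    ofReal_integral_eq_lintegral_ofReal]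
  · refine lintegral_congr fun ψ => ?_
    rw [Pi.mul_apply, ← ENNReal.ofReal_mul (div_nonneg (hr0 ψ) zero_le_four)]
    ring_nf
  · exact (by fun_prop : Continuous fun ψ => 1 / 4 * (f ψ * wulffRadius p ψ)).integrableOn_Ioc
  · exact .of_forall fun ψ => mul_nonneg (by norm_num) (mul_nonneg (hf0 ψ) (hr0 ψ))

theorem lintegral_abs_inner_zonoidMeasure (hp : ContDiffOn ℝ 2 p {0}ᶜ) (x : E2) :
    ∫⁻ ψ, ENNReal.ofReal |⟪x, dir (ψ + Real.pi / 2)⟫| ∂zonoidMeasure p =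
      ENNReal.ofReal (p x) := by
  obtain ⟨φ, hφ⟩ := exists_eq_norm_smul_dir x
  have hinner : ∀ ψ, |⟪x, dir (ψ + Real.pi / 2)⟫| = ‖x‖ * |Real.sin (ψ - φ)| := fun ψ => by
    rw [hφ, real_inner_smul_left, inner_dir_dir, ← Real.cos_neg, norm_smul, norm_dir, mul_one,
      norm_norm, abs_mul, abs_norm, ← abs_neg (Real.sin _), ← Real.cos_add_pi_div_two]
    ring_nf
  have := continuous_dir
  rw [lintegral_ofReal_zonoidMeasure hp (by fun_prop) fun _ => abs_nonneg _]
  simp only [hinner, mul_assoc, intervalIntegral.integral_const_mul]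
  congr 1
  calc 1 / 4 * (‖x‖ * ∫ ψ in -Real.pi..Real.pi, |Real.sin (ψ - φ)| * wulffRadius p ψ)
      = 1 / 4 * (‖x‖ * (4 * angularSupport p φ)) :=
        congrArg (1 / 4 * (‖x‖ * ·)) (integral_abs_sin_sub_mul_add_deriv_deriv
          (contDiff_angularSupport hp) periodic_angularSupport φ)
    _ = p (‖x‖ • dir φ) := by rw [map_smul_eq_mul, norm_norm, angularSupport]; ring
    _ = p x := by rw [← hφ]

theorem zonoidMeasure_univ (hp : ContDiffOn ℝ 2 p {0}ᶜ) :
    zonoidMeasure p univ =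
      ENNReal.ofReal (1 / 4 * ∫ θ in -Real.pi..Real.pi, angularSupport p θ) := by
  have hper : Function.Periodic (angularSupport p) (Real.pi - -Real.pi) := by
    rw [sub_neg_eq_add, ← two_mul]
    exact_mod_cast periodic_angularSupport.nat_mul 2
  rw [← lintegral_one, ← ENNReal.ofReal_one,
    lintegral_ofReal_zonoidMeasure hp continuous_const fun _ => zero_le_one]
  simp only [one_mul, wulffRadius]
  rw [integral_add_deriv_deriv (contDiff_angularSupport hp) hper]

theorem inner_div_le_norm_div (hα : 0 < α) (h : ∀ ξ, α * ‖ξ‖ ≤ p ξ) (ξ v : E2) :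
    ⟪ξ, v⟫ / p ξ ≤ ‖v‖ / α := by
  refine div_le_of_le_mul₀ (apply_nonneg p ξ) (by positivity) ?_
  calc ⟪ξ, v⟫ ≤ ‖v‖ / α * (α * ‖ξ‖) := by
        rw [← mul_assoc, div_mul_cancel₀ _ hα.ne', mul_comm]
        exact real_inner_le_norm ξ v
    _ ≤ ‖v‖ / α * p ξ := by gcongr; exact h ξ

theorem ball_subset_wulff (hα : 0 < α) (h : ∀ ξ, α * ‖ξ‖ ≤ p ξ) :
    Metric.ball 0 α ⊆ Wulff p := fun v hv => by
  have : Nonempty {ξ : E2 // ξ ≠ 0} := ⟨⟨dir 0, dir_ne_zero 0⟩⟩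
  have hle : polar p v ≤ ‖v‖ / α := ciSup_le fun ξ => inner_div_le_norm_div hα h ξ v
  exact hle.trans_lt ((div_lt_one hα).2 (mem_ball_zero_iff.1 hv))

theorem inner_lt_of_mem_wulff (hα : 0 < α) (h : ∀ ξ, α * ‖ξ‖ ≤ p ξ) {v ξ : E2}
    (hv : v ∈ Wulff p) (hξ : ξ ≠ 0) : ⟪ξ, v⟫ < p ξ := by
  have hpξ : 0 < p ξ := (mul_pos hα (norm_pos_iff.2 hξ)).trans_le (h ξ)
  have hle : ⟪ξ, v⟫ / p ξ ≤ polar p v :=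
    le_ciSup (f := fun ξ : {ξ : E2 // ξ ≠ 0} => ⟪(ξ : E2), v⟫ / p ξ)
      ⟨‖v‖ / α, forall_mem_range.2 fun ξ => inner_div_le_norm_div hα h ξ v⟩ ⟨ξ, hξ⟩
  exact (div_lt_one hpξ).1 (hle.trans_lt hv)

theorem lintegral_Ioi_indicator_Iic {a : ℝ} (ha : 0 ≤ a) :
    ∫⁻ r in Ioi (0 : ℝ), (Iic a).indicator ENNReal.ofReal r = ENNReal.ofReal (a ^ 2 / 2) := by
  rw [lintegral_indicator measurableSet_Iic, Measure.restrict_restrict measurableSet_Iic,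
    Iic_inter_Ioi, ← ofReal_integral_eq_lintegral_ofReal, ← intervalIntegral.integral_of_le ha,
    integral_id]
  · simp
  · exact continuous_id.integrableOn_Ioc
  · exact (ae_restrict_mem measurableSet_Ioc).mono fun r hr => hr.1.le

theorem continuous_angularSupport : Continuous (angularSupport p) :=
  p.convexOn.locallyLipschitz.continuous.comp continuous_dir

theorem volume_le_of_forall_inner_dir_le {S : Set E2} (hS : IsClosed S)
    (h : ∀ v ∈ S, ∀ θ, ⟪dir θ, v⟫ ≤ angularSupport p θ) :
    volume S ≤ ENNReal.ofReal (1 / 2 * ∫ θ in -Real.pi..Real.pi, angularSupport p θ ^ 2) := by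
  have hc := continuous_angularSupport (p := p)
  have hmeas : Measurable fun q : ℝ × ℝ =>
      (Iic (angularSupport p q.2)).indicator ENNReal.ofReal q.1 :=
    (ENNReal.measurable_ofReal.comp measurable_fst).indicator
      (measurableSet_le measurable_fst (hc.measurable.comp measurable_snd))
  calc volume S
      = ∫⁻ q in Ioi (0 : ℝ) ×ˢ Ioo (-Real.pi) Real.pi,
          ENNReal.ofReal q.1 * S.indicator 1 (q.1 • dir q.2) := by
        rw [← lintegral_indicator_one hS.measurableSet, lintegral_eq_lintegral_smul_dir]
    _ ≤ ∫⁻ q in Ioi (0 : ℝ) ×ˢ Ioo (-Real.pi) Real.pi,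
          (Iic (angularSupport p q.2)).indicator ENNReal.ofReal q.1 := by
        refine lintegral_mono fun q => ?_
        by_cases hq : q.1 • dir q.2 ∈ S
        · have := h _ hq q.2
          rw [real_inner_smul_right, inner_dir_dir, sub_self, Real.cos_zero, mul_one] at this
          simp [hq, this]
        · simp [hq]
    _ = ∫⁻ θ in Ioo (-Real.pi) Real.pi, ENNReal.ofReal (angularSupport p θ ^ 2 / 2) := by
        rw [Measure.volume_eq_prod, ← Measure.prod_restrict, lintegral_prod_symm' _ hmeas]
        exact lintegral_congr fun θ =>
          lintegral_Ioi_indicator_Iic (apply_nonneg p (dir θ))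
    _ = ENNReal.ofReal (1 / 2 * ∫ θ in -Real.pi..Real.pi, angularSupport p θ ^ 2) := by
        rw [restrict_Ioo_eq_restrict_Ioc, ← ofReal_integral_eq_lintegral_ofReal,
          ← intervalIntegral.integral_of_le (by linarith [Real.pi_pos]),
          intervalIntegral.integral_div, one_div_mul_eq_div]
        · exact (by fun_prop : Continuous fun θ => angularSupport p θ ^ 2 / 2).integrableOn_Ioc
        · exact .of_forall fun θ => by positivity

theorem volume_wulff_le (hα : 0 < α) (h : ∀ ξ, α * ‖ξ‖ ≤ p ξ) :
    volume (Wulff p) ≤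
      ENNReal.ofReal (1 / 2 * ∫ θ in -Real.pi..Real.pi, angularSupport p θ ^ 2) := by
  let S : Set E2 := {v | ∀ θ, ⟪dir θ, v⟫ ≤ angularSupport p θ}
  have hsub : Wulff p ⊆ S := fun v hv θ => (inner_lt_of_mem_wulff hα h hv (dir_ne_zero θ)).le
  have hclosed : IsClosed S := by
    simp only [S, ofPred_forall]
    exact isClosed_iInter fun θ => isClosed_le (by fun_prop) continuous_const
  exact (measure_mono hsub).trans (volume_le_of_forall_inner_dir_le hclosed fun v hv => hv)

theorem kappa_pos (hα : 0 < α) (h : ∀ ξ, α * ‖ξ‖ ≤ p ξ) : 0 < kappa p :=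
  ENNReal.toReal_pos
    ((Metric.measure_ball_pos volume 0 hα).trans_le (measure_mono (ball_subset_wulff hα h))).ne'
    ((volume_wulff_le hα h).trans_lt ENNReal.ofReal_lt_top).ne

theorem two_mul_kappa_le (hα : 0 < α) (h : ∀ ξ, α * ‖ξ‖ ≤ p ξ) (hβ : ∀ ξ, p ξ ≤ β * ‖ξ‖) :
    2 * kappa p ≤ β * ∫ θ in -Real.pi..Real.pi, angularSupport p θ := by
  have hc := continuous_angularSupport (p := p)
  have hpi : -Real.pi ≤ Real.pi := by linarith [Real.pi_pos]
  have hkappa : kappa p ≤ 1 / 2 * ∫ θ in -Real.pi..Real.pi, angularSupport p θ ^ 2 :=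
    ENNReal.toReal_le_of_le_ofReal (mul_nonneg (by norm_num)
      (intervalIntegral.integral_nonneg hpi fun θ _ => sq_nonneg _)) (volume_wulff_le hα h)
  have hsq : ∫ θ in -Real.pi..Real.pi, angularSupport p θ ^ 2 ≤
      ∫ θ in -Real.pi..Real.pi, β * angularSupport p θ := by
    refine intervalIntegral.integral_mono hpi (Continuous.intervalIntegrable (by fun_prop) ..)
      (Continuous.intervalIntegrable (by fun_prop) ..) fun θ => ?_
    rw [sq]
    exact mul_le_mul_of_nonneg_right (by simpa [norm_dir] using! hβ (dir θ)) (apply_nonneg p _)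
  rw [intervalIntegral.integral_const_mul] at hsq
  linarith

end Wulff

section ConcaveLevelSet

variable {F : Type*} [NormedAddCommGroup F] [InnerProductSpace ℝ F] [CompleteSpace F]

theorem le_add_inner_gradient_of_concaveOn {s : Set F} {f : F → ℝ} {x y : F}
    (hf : ConcaveOn ℝ s f) (hx : x ∈ s) (hy : y ∈ s) (hd : DifferentiableAt ℝ f x) :
    f y ≤ f x + ⟪gradient f x, y - x⟫ := by
  have hline : HasDerivAt (f ∘ AffineMap.lineMap (k := ℝ) x y) ⟪gradient f x, y - x⟫ 0 := by
    rw [inner_gradient_left]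
    refine HasFDerivAt.comp_hasDerivAt 0 ?_ AffineMap.hasDerivAt_lineMap
    rw [AffineMap.lineMap_apply_zero]
    exact hd.hasFDerivAt
  have := (hf.comp_affineMap (AffineMap.lineMap x y)).slope_le_of_hasDerivAt (x := (0 : ℝ)) (y := 1)
    (by simpa using hx) (by simpa using hy) one_pos hline
  simp only [slope_def_field, Function.comp_apply, AffineMap.lineMap_apply_one,
    AffineMap.lineMap_apply_zero, sub_zero, div_one] at this
  linarith

theorem exists_lt_of_inner_gradient_ne_zero {f : F → ℝ} {x v : F} {U : Set F}
    (hd : DifferentiableAt ℝ f x) (hU : U ∈ nhds x) (hv : ⟪gradient f x, v⟫ ≠ 0) :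
    ∃ r : ℝ, x + r • v ∈ U ∧ f x < f (x + r • v) := by
  have hline : HasDerivAt (fun r : ℝ => f (x + r • v)) ⟪gradient f x, v⟫ 0 := by
    rw [inner_gradient_left]
    exact hd.hasFDerivAt.hasLineDerivAt v
  by_contra! h
  have hlim : Filter.Tendsto (fun r : ℝ => x + r • v) (nhds 0) (nhds x) := by
    simpa using (by fun_prop : Continuous fun r : ℝ => x + r • v).tendsto 0
  have hmax : IsLocalMax (fun r : ℝ => f (x + r • v)) 0 :=
    (hlim.eventually_mem hU).mono fun r hr => by simpa using h r hr
  exact hv (hmax.hasDerivAt_eq_zero hline)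

theorem exists_mem_inter_frontier {X : Type*} [TopologicalSpace X] {S U : Set X} {x y : X}
    (hS : IsPreconnected S) (hU : IsOpen U) (hx : x ∈ S) (hxU : x ∈ U) (hy : y ∈ S)
    (hyU : y ∉ U) : ∃ z ∈ S, z ∈ frontier U := by
  by_contra! h
  have hsub : S ⊆ U ∪ (closure U)ᶜ := fun z hz => by
    by_contra! hzU
    simp only [mem_union, mem_compl_iff, not_or, not_not] at hzU
    exact h z hz (hU.frontier_eq ▸ ⟨hzU.2, hzU.1⟩)
  exact hyU (hS.subset_left_of_subset_union hU isClosed_closure.isOpen_compl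
    (disjoint_compl_right.mono_left subset_closure) hsub ⟨x, hx, hxU⟩ hy)

variable {Ω : Set E2} {u : E2 → ℝ} {t : ℝ}

theorem isOpen_superLevel (hΩ : IsOpen Ω) (hu : ContinuousOn u Ω) : IsOpen (superLevel Ω u t) :=
  hu.isOpen_inter_preimage hΩ isOpen_Ioi

theorem isCompact_levelSet (hΩ : Bornology.IsBounded Ω) (hu : ContinuousOn u (closure Ω)) :
    IsCompact (levelSet Ω u t) :=
  hΩ.isCompact_closure.of_isClosed_subset
    (hu.preimage_isClosed_of_isClosed isClosed_closure isClosed_singleton) inter_subset_left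

theorem mem_of_mem_levelSet (hΩ : IsOpen Ω) (hu0 : ∀ x ∈ frontier Ω, u x = 0) (ht : t ≠ 0) {x : E2}
    (hx : x ∈ levelSet Ω u t) : x ∈ Ω := by
  by_contra hxΩ
  exact ht (hx.2 ▸ hu0 x (hΩ.frontier_eq ▸ ⟨hx.1, hxΩ⟩))

theorem frontier_superLevel_subset_levelSet (hΩ : IsOpen Ω) (hu : ContinuousOn u (closure Ω))
    (hu0 : ∀ x ∈ frontier Ω, u x = 0) (ht : 0 < t) :
    frontier (superLevel Ω u t) ⊆ levelSet Ω u t := by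
  rw [(isOpen_superLevel hΩ (hu.mono subset_closure)).frontier_eq]
  rintro x ⟨hx, hxt⟩
  have hxΩ : x ∈ closure Ω := closure_mono (fun y hy => hy.1) hx
  have hle : t ≤ u x := continuousWithinAt_const.closure_le hx
    ((hu x hxΩ).mono fun y hy => subset_closure hy.1) fun y hy => hy.2.le
  have hxΩ' : x ∈ Ω := by
    by_contra h
    exact (hu0 x (hΩ.frontier_eq ▸ ⟨hxΩ, h⟩) ▸ hle).not_gt ht
  exact ⟨hxΩ, (not_lt.1 fun h => hxt ⟨hxΩ', h⟩).antisymm hle⟩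

theorem inner_nuLevel_eq (x v : E2) :
    ⟪nuLevel u x, v⟫ = -(‖gradient u x‖⁻¹ * ⟪gradient u x, v⟫) := by
  rw [nuLevel, inner_neg_left, real_inner_smul_left]

theorem norm_nuLevel {x : E2} (hx : gradient u x ≠ 0) : ‖nuLevel u x‖ = 1 := by
  rw [nuLevel, norm_neg, norm_smul, norm_inv, norm_norm, inv_mul_cancel₀ (norm_ne_zero_iff.2 hx)]

theorem measurable_nuLevel : Measurable (nuLevel u) := by
  have hgrad : Measurable (gradient u) :=
    (InnerProductSpace.toDual ℝ E2).symm.continuous.measurable.comp (measurable_fderiv ℝ u)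
  exact (hgrad.norm.inv.smul hgrad).neg

theorem continuousAt_nuLevel {x : E2} (hu : ContDiffAt ℝ 1 u x) (hx : gradient u x ≠ 0) :
    ContinuousAt (nuLevel u) x := by
  have hgrad : ContinuousAt (gradient u) x :=
    (InnerProductSpace.toDual ℝ E2).symm.continuous.continuousAt.comp
      (hu.continuousAt_fderiv one_ne_zero)
  exact ((hgrad.norm.inv₀ (norm_ne_zero_iff.2 hx)).smul hgrad).neg

theorem gradient_ne_zero_of_lt {x y : E2} (hu : ConcaveOn ℝ Ω u) (hx : x ∈ Ω) (hy : y ∈ Ω)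
    (hd : DifferentiableAt ℝ u x) (hxy : u x < u y) : gradient u x ≠ 0 := fun h => by
  have := le_add_inner_gradient_of_concaveOn hu hx hy hd
  rw [h, inner_zero_left] at this
  linarith

theorem inner_nuLevel_sub_nonpos {x y : E2} (hu : ConcaveOn ℝ Ω u) (hx : x ∈ Ω) (hy : y ∈ Ω)
    (hd : DifferentiableAt ℝ u x) (hxy : u x ≤ u y) : ⟪nuLevel u x, y - x⟫ ≤ 0 := by
  have := le_add_inner_gradient_of_concaveOn hu hx hy hd
  rw [inner_nuLevel_eq, neg_nonpos]
  exact mul_nonneg (by positivity) (by linarith)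

theorem inner_nuLevel_sub_neg {x y : E2} (hu : ConcaveOn ℝ Ω u) (hx : x ∈ Ω) (hy : y ∈ Ω)
    (hd : DifferentiableAt ℝ u x) (hxy : u x < u y) : ⟪nuLevel u x, y - x⟫ < 0 := by
  have := le_add_inner_gradient_of_concaveOn hu hx hy hd
  rw [inner_nuLevel_eq, neg_lt_zero]
  exact mul_pos (inv_pos.2 (norm_pos_iff.2 (gradient_ne_zero_of_lt hu hx hy hd hxy)))
    (by linarith)

end ConcaveLevelSet

section Shadow

variable {Ω : Set E2} {u : E2 → ℝ} {t ψ : ℝ}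

theorem abs_abs_inner_dir_sub_le {ν : E2} (hν : ‖ν‖ = 1) (ψ : ℝ) (w : E2) :
    |(|⟪dir ψ, w⟫| - |⟪ν, dir (ψ + Real.pi / 2)⟫| * ‖w‖)| ≤ 2 * |⟪ν, w⟫| := by
  obtain ⟨φ, hφ⟩ : ∃ φ, ν = dir (φ + Real.pi / 2) := by
    obtain ⟨θ, hθ⟩ := exists_eq_norm_smul_dir ν
    exact ⟨θ - Real.pi / 2, by rw [sub_add_cancel, hθ, hν, one_smul]⟩
  have hw := eq_inner_smul_dir_add φ w
  rw [← hφ] at hw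
  set a := ⟪dir φ, w⟫
  set b := ⟪ν, w⟫
  have hinner : ⟪dir ψ, w⟫ = a * Real.cos (ψ - φ) + b * ⟪dir ψ, ν⟫ := by
    rw [hw, inner_add_right, real_inner_smul_right, real_inner_smul_right, inner_dir_dir]
  have hcos : ⟪ν, dir (ψ + Real.pi / 2)⟫ = Real.cos (ψ - φ) := by
    rw [hφ, inner_dir_dir, ← Real.cos_neg]
    ring_nf
  have hnorm_le : ‖w‖ ≤ |a| + |b| := by
    calc ‖w‖ = ‖a • dir φ + b • ν‖ := congrArg norm hw
      _ ≤ ‖a • dir φ‖ + ‖b • ν‖ := norm_add_le _ _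
      _ = |a| + |b| := by simp [norm_smul, norm_dir, hν]
  have hle_norm : |a| ≤ ‖w‖ := by simpa [norm_dir] using abs_real_inner_le_norm (dir φ) w
  have hνψ : |⟪dir ψ, ν⟫| ≤ 1 := by simpa [norm_dir, hν] using abs_real_inner_le_norm (dir ψ) ν
  calc |(|⟪dir ψ, w⟫| - |⟪ν, dir (ψ + Real.pi / 2)⟫| * ‖w‖)|
      = |(|⟪dir ψ, w⟫| - |a * Real.cos (ψ - φ)|) - |Real.cos (ψ - φ)| * (‖w‖ - |a|)| := by
        rw [hcos, abs_mul]
        ring_nf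
    _ ≤ |⟪dir ψ, w⟫ - a * Real.cos (ψ - φ)| + |Real.cos (ψ - φ)| * (‖w‖ - |a|) := by
        refine (abs_sub _ _).trans (add_le_add (abs_abs_sub_abs_le _ _) ?_)
        rw [abs_of_nonneg (mul_nonneg (abs_nonneg _) (sub_nonneg.2 hle_norm))]
    _ ≤ |b| * 1 + 1 * |b| := by
        rw [hinner, add_sub_cancel_left, abs_mul]
        gcongr
        · exact Real.abs_cos_le_one _
        · linarith
    _ = 2 * |b| := by ring

theorem hasStrictMetricDerivWithinAt_inner_dir {S : Set E2} {x : E2} (hu : ContDiffAt ℝ 1 u x)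
    (hx : gradient u x ≠ 0) (hS : ∀ y ∈ S, u y = t) (ψ : ℝ) :
    HasStrictMetricDerivWithinAt (fun y : E2 => ⟪dir ψ, y⟫) |⟪nuLevel u x, dir (ψ + Real.pi / 2)⟫|
      S x := by
  have hle : nhdsWithin x S ×ˢ nhdsWithin x S ≤ nhds (x, x) :=
    (Filter.prod_mono nhdsWithin_le_nhds nhdsWithin_le_nhds).trans_eq nhds_prod_eq.symm
  refine Asymptotics.IsBigO.trans_isLittleO (.of_bound (2 * ‖gradient u x‖⁻¹) ?_)
    (((hu.hasStrictFDerivAt one_ne_zero).isLittleO.mono hle).norm_right.congr_right fun q =>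
      (dist_eq_norm q.1 q.2).symm)
  filter_upwards [Filter.prod_mem_prod self_mem_nhdsWithin self_mem_nhdsWithin] with q hq
  have hbound := abs_abs_inner_dir_sub_le (norm_nuLevel hx) ψ (q.1 - q.2)
  have hνfderiv : |⟪nuLevel u x, q.1 - q.2⟫| = ‖gradient u x‖⁻¹ * |fderiv ℝ u x (q.1 - q.2)| := by
    rw [inner_nuLevel_eq, inner_gradient_left, abs_neg, abs_mul, abs_inv, abs_norm]
  rw [hνfderiv, ← mul_assoc] at hbound
  rwa [hS _ hq.1, hS _ hq.2, sub_self, zero_sub, norm_neg, Real.norm_eq_abs, Real.norm_eq_abs,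
    Real.dist_eq, dist_eq_norm, ← inner_sub_right]

/-- The orthogonal projection of `K` to the line spanned by `dir ψ`, in the coordinate of that
line. -/
def shadow (K : Set E2) (ψ : ℝ) : Set ℝ := (fun x : E2 => ⟪dir ψ, x⟫) '' K

theorem volume_shadow_add_pi (K : Set E2) (ψ : ℝ) :
    volume (shadow K (ψ + Real.pi)) = volume (shadow K ψ) := by
  have hneg : shadow K (ψ + Real.pi) = -shadow K ψ := by
    simp only [shadow, dir_add_pi, inner_neg_left, ← image_neg_eq_neg, image_image]
  rw [hneg, Measure.measure_neg]

theorem volume_shadow_lt_top {K : Set E2} (hK : Bornology.IsBounded K) (ψ : ℝ) :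
    volume (shadow K ψ) < ∞ :=
  ((innerSL ℝ (dir ψ)).lipschitz.isBounded_image hK).measure_lt_top

theorem hausdorffMeasure_lt_top_of_gradient_ne_zero {S : Set E2} (hS : IsCompact S)
    (hu : ∀ x ∈ S, ContDiffAt ℝ 1 u x) (hgrad : ∀ x ∈ S, gradient u x ≠ 0)
    (hconst : ∀ x ∈ S, u x = t) : μH[1] S < ∞ := by
  refine hS.measure_lt_top_of_nhdsWithin fun x hx => ?_
  obtain ⟨φ, hφ⟩ := exists_eq_norm_smul_dir (nuLevel u x)
  have hspeed : |⟪nuLevel u x, dir (φ - Real.pi / 2 + Real.pi / 2)⟫| = 1 := by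
    rw [hφ, norm_nuLevel (hgrad x hx), one_smul, sub_add_cancel, inner_dir_dir]
    simp
  obtain ⟨U, hU, hfU⟩ := hasStrictMetricDerivWithinAt_iff.1
    (hasStrictMetricDerivWithinAt_inner_dir (hu x hx) (hgrad x hx) hconst (φ - Real.pi / 2))
    (1 / 2) one_half_pos
  rw [hspeed] at hfU
  refine ⟨U ∩ S, Filter.inter_mem hU self_mem_nhdsWithin, ?_⟩
  have hexpand : ENNReal.ofReal (1 / 2) * μH[1] (U ∩ S) ≤
      volume (shadow (U ∩ S) (φ - Real.pi / 2)) := by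
    rw [← hausdorffMeasure_real]
    refine ofReal_mul_hausdorffMeasure_le_image fun y hy z hz => ?_
    linarith [(abs_le.1 (hfU y hy.1 z hz.1)).1]
  refine ENNReal.lt_top_of_mul_ne_top_right (a := ENNReal.ofReal (1 / 2)) ?_ (by simp)
  exact (hexpand.trans_lt (volume_shadow_lt_top (hS.isBounded.subset inter_subset_right) _)).ne

/-- The part of the level set `{u = t}` seen from the direction `dir (ψ + π / 2)`; it projects
injectively to the line spanned by `dir ψ`. -/
def visiblePart (Ω : Set E2) (u : E2 → ℝ) (t ψ : ℝ) : Set E2 :=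
  levelSet Ω u t ∩ {x | 0 < ⟪nuLevel u x, dir (ψ + Real.pi / 2)⟫}

theorem measurableSet_visiblePart (hΩ : Bornology.IsBounded Ω) (hu : ContinuousOn u (closure Ω)) :
    MeasurableSet (visiblePart Ω u t ψ) :=
  (isCompact_levelSet hΩ hu).measurableSet.inter
    (measurableSet_lt measurable_const (measurable_nuLevel.inner measurable_const))

theorem inner_dir_add_smul_dir (ψ : ℝ) (x : E2) (r : ℝ) :
    ⟪dir ψ, x + r • dir (ψ + Real.pi / 2)⟫ = ⟪dir ψ, x⟫ := by
  rw [inner_add_right, real_inner_smul_right, inner_dir_dir, sub_add_cancel_left, Real.cos_neg,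
    Real.cos_pi_div_two, mul_zero, add_zero]

open scoped Pointwise in
theorem shadow_add_Icc_subset {A B : Set E2} {δ : ℝ} (h : ∀ x ∈ A, Metric.closedBall x δ ⊆ B)
    (ψ : ℝ) : shadow A ψ + Icc (-δ) δ ⊆ shadow B ψ := by
  rintro _ ⟨_, ⟨x, hx, rfl⟩, r, hr, rfl⟩
  refine ⟨x + r • dir ψ, h x hx ?_, ?_⟩
  · simpa [norm_smul, norm_dir] using abs_le.2 hr
  · simp [inner_add_right, real_inner_smul_right, norm_dir]

end Shadow

section ConcaveBump

/-- `u` is `C¹` up to the boundary of the bounded open set `Ω`, vanishes there and is concave in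
`Ω`: the part of `u ∈ Φ₀(Ω)` on which the geometry of the level sets depends. -/
structure IsConcaveBump (Ω : Set E2) (u : E2 → ℝ) : Prop where
  isOpen : IsOpen Ω
  isBounded : Bornology.IsBounded Ω
  contDiffOn : ContDiffOn ℝ 1 u (closure Ω)
  eq_zero : ∀ x ∈ frontier Ω, u x = 0
  concaveOn : ConcaveOn ℝ Ω u

namespace IsConcaveBump

variable {Ω : Set E2} {u : E2 → ℝ} {t ψ : ℝ}

theorem contDiffAt (hu : IsConcaveBump Ω u) {x : E2} (hx : x ∈ Ω) : ContDiffAt ℝ 1 u x :=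
  hu.contDiffOn.contDiffAt (Filter.mem_of_superset (hu.isOpen.mem_nhds hx) subset_closure)

theorem differentiableAt (hu : IsConcaveBump Ω u) {x : E2} (hx : x ∈ Ω) :
    DifferentiableAt ℝ u x :=
  (hu.contDiffAt hx).differentiableAt one_ne_zero

theorem levelSet_subset (hu : IsConcaveBump Ω u) (ht : 0 < t) : levelSet Ω u t ⊆ Ω :=
  fun _ hx => mem_of_mem_levelSet hu.isOpen hu.eq_zero ht.ne' hx

theorem frontier_superLevel_subset (hu : IsConcaveBump Ω u) (ht : 0 < t) :
    frontier (superLevel Ω u t) ⊆ levelSet Ω u t :=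
  frontier_superLevel_subset_levelSet hu.isOpen hu.contDiffOn.continuousOn hu.eq_zero ht

theorem gradient_ne_zero (hu : IsConcaveBump Ω u) (ht : 0 < t)
    (hne : (superLevel Ω u t).Nonempty) {x : E2}
    (hx : x ∈ levelSet Ω u t) : gradient u x ≠ 0 := by
  obtain ⟨y, hy, hty⟩ := hne
  have hxΩ := hu.levelSet_subset ht hx
  exact gradient_ne_zero_of_lt hu.concaveOn hxΩ hy (hu.differentiableAt hxΩ) (hx.2.trans_lt hty)

theorem hausdorffMeasure_levelSet_lt_top (hu : IsConcaveBump Ω u) (ht : 0 < t)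
    (hne : (superLevel Ω u t).Nonempty) :
    μH[1] (levelSet Ω u t) < ∞ :=
  hausdorffMeasure_lt_top_of_gradient_ne_zero
    (isCompact_levelSet hu.isBounded hu.contDiffOn.continuousOn)
    (fun _ hx => hu.contDiffAt (hu.levelSet_subset ht hx)) (fun _ => hu.gradient_ne_zero ht hne)
    fun _ hx => hx.2

theorem inner_dir_sub_nonpos_of_mem_visiblePart (hu : IsConcaveBump Ω u) (ht : 0 < t) {x y : E2}
    (hx : x ∈ visiblePart Ω u t ψ) (hy : y ∈ levelSet Ω u t) (hxy : ⟪dir ψ, x⟫ = ⟪dir ψ, y⟫) :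
    ⟪dir (ψ + Real.pi / 2), y - x⟫ ≤ 0 := by
  have hxΩ := hu.levelSet_subset ht hx.1
  have hsub := inner_nuLevel_sub_nonpos hu.concaveOn hxΩ (hu.levelSet_subset ht hy)
    (hu.differentiableAt hxΩ) (hx.1.2.trans hy.2.symm).le
  rw [eq_inner_smul_dir_add ψ (y - x), inner_sub_right (dir ψ), hxy, sub_self, zero_smul, zero_add,
    real_inner_smul_right] at hsub
  exact nonpos_of_mul_nonpos_left hsub hx.2

theorem injOn_inner_dir_visiblePart (hu : IsConcaveBump Ω u) (ht : 0 < t) :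
    InjOn (fun x : E2 => ⟪dir ψ, x⟫) (visiblePart Ω u t ψ) := by
  intro x hx y hy (hxy : ⟪dir ψ, x⟫ = ⟪dir ψ, y⟫)
  have hle := hu.inner_dir_sub_nonpos_of_mem_visiblePart ht hx hy.1 hxy
  have hge := hu.inner_dir_sub_nonpos_of_mem_visiblePart ht hy hx.1 hxy.symm
  rw [← neg_sub, inner_neg_right, neg_nonpos] at hge
  have hzero := eq_inner_smul_dir_add ψ (y - x)
  rw [hle.antisymm hge, inner_sub_right, hxy, sub_self, zero_smul, zero_smul, zero_add] at hzero
  exact (sub_eq_zero.1 hzero).symm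

theorem shadow_visiblePart_subset (hu : IsConcaveBump Ω u) (ht : 0 < t) :
    shadow (visiblePart Ω u t ψ) ψ ⊆ shadow (superLevel Ω u t) ψ := by
  rintro _ ⟨x, ⟨hx, hν⟩, rfl⟩
  have hxΩ := hu.levelSet_subset ht hx
  rw [mem_ofPred_eq, inner_nuLevel_eq, neg_pos] at hν
  obtain ⟨r, hrΩ, hr⟩ := exists_lt_of_inner_gradient_ne_zero (hu.differentiableAt hxΩ)
    (hu.isOpen.mem_nhds hxΩ) (right_ne_zero_of_mul hν.ne)
  exact ⟨_, ⟨hrΩ, hx.2 ▸ hr⟩, inner_dir_add_smul_dir ψ x r⟩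

theorem shadow_superLevel_subset (hu : IsConcaveBump Ω u) (ht : 0 < t) :
    shadow (superLevel Ω u t) ψ ⊆ shadow (visiblePart Ω u t ψ) ψ := by
  rintro _ ⟨x, hx, rfl⟩
  set e := dir (ψ + Real.pi / 2)
  let ray : ℝ → E2 := fun r => x + r • e
  obtain ⟨R, hR⟩ := hu.isBounded.subset_closedBall x
  have hfar : ray (|R| + 1) ∉ superLevel Ω u t := fun h => by
    have := hR h.1
    rw [Metric.mem_closedBall, dist_eq_norm, add_sub_cancel_left, norm_smul, norm_dir, mul_one,
      Real.norm_eq_abs, abs_of_pos (by positivity)] at this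
    linarith [le_abs_self R]
  have hray : IsPreconnected (ray '' Ici 0) :=
    isPreconnected_Ici.image ray (by fun_prop : Continuous ray).continuousOn
  obtain ⟨_, ⟨r, hr, rfl⟩, hlevel⟩ := exists_mem_inter_frontier hray
    (isOpen_superLevel hu.isOpen (hu.contDiffOn.continuousOn.mono subset_closure))
    ⟨0, self_mem_Ici, rfl⟩ (by simpa [ray] using hx) ⟨|R| + 1, mem_Ici.2 (by positivity), rfl⟩ hfar
  have hmem := hu.frontier_superLevel_subset ht hlevel
  have hmemΩ := hu.levelSet_subset ht hmem
  have hneg := inner_nuLevel_sub_neg hu.concaveOn hmemΩ hx.1 (hu.differentiableAt hmemΩ)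
    (hmem.2.trans_lt hx.2)
  rw [sub_add_cancel_left, inner_neg_right, neg_lt_zero, real_inner_smul_right] at hneg
  exact ⟨ray r, ⟨hmem, pos_of_mul_pos_right hneg hr⟩, inner_dir_add_smul_dir ψ x r⟩

theorem lintegral_inner_nuLevel (hu : IsConcaveBump Ω u) (ht : 0 < t)
    (hne : (superLevel Ω u t).Nonempty) (ψ : ℝ) :
    ∫⁻ x in levelSet Ω u t, ENNReal.ofReal ⟪nuLevel u x, dir (ψ + Real.pi / 2)⟫ ∂μH[1] =
      volume (shadow (superLevel Ω u t) ψ) := by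
  let g : E2 → ℝ := fun x => ⟪nuLevel u x, dir (ψ + Real.pi / 2)⟫
  have hvis : MeasurableSet (visiblePart Ω u t ψ) :=
    measurableSet_visiblePart hu.isBounded hu.contDiffOn.continuousOn
  have hvisΩ : visiblePart Ω u t ψ ⊆ Ω := fun x hx => hu.levelSet_subset ht hx.1
  have hgrad : ∀ x ∈ visiblePart Ω u t ψ, gradient u x ≠ 0 := fun x hx =>
    hu.gradient_ne_zero ht hne hx.1
  calc ∫⁻ x in levelSet Ω u t, ENNReal.ofReal (g x) ∂μH[1]
      = ∫⁻ x in visiblePart Ω u t ψ, ENNReal.ofReal (g x) ∂μH[1] := by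
        rw [← setLIntegral_eq_of_support_subset (s := {x | 0 < g x}) fun x hx => ?_,
          Measure.restrict_restrict, inter_comm]
        · rfl
        · exact measurableSet_lt measurable_const (measurable_nuLevel.inner measurable_const)
        · simpa using hx
    _ = ∫⁻ x in visiblePart Ω u t ψ, ENNReal.ofReal |g x| ∂μH[1] :=
        setLIntegral_congr_fun hvis fun x hx => by rw [abs_of_pos hx.2]
    _ = μH[1] (shadow (visiblePart Ω u t ψ) ψ) := by
        refine setLIntegral_eq_hausdorffMeasure_image hvis
          ((measure_mono inter_subset_left).trans_lt
            (hu.hausdorffMeasure_levelSet_lt_top ht hne)).ne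
          (hu.injOn_inner_dir_visiblePart ht) (fun x hx => ?_) fun x hx =>
            hasStrictMetricDerivWithinAt_inner_dir (hu.contDiffAt (hvisΩ hx)) (hgrad x hx)
              (fun y hy => hy.1.2) ψ
        exact ((continuousAt_nuLevel (hu.contDiffAt (hvisΩ hx)) (hgrad x hx)).inner
          continuousAt_const).abs.continuousWithinAt
    _ = volume (shadow (superLevel Ω u t) ψ) := by
        rw [hausdorffMeasure_real,
          (hu.shadow_visiblePart_subset ht).antisymm (hu.shadow_superLevel_subset ht)]

theorem lintegral_abs_inner_nuLevel (hu : IsConcaveBump Ω u) (ht : 0 < t)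
    (hne : (superLevel Ω u t).Nonempty) (ψ : ℝ) :
    ∫⁻ x in levelSet Ω u t, ENNReal.ofReal |⟪nuLevel u x, dir (ψ + Real.pi / 2)⟫| ∂μH[1] =
      2 * volume (shadow (superLevel Ω u t) ψ) := by
  have hneg : ∀ x : E2, ENNReal.ofReal |⟪nuLevel u x, dir (ψ + Real.pi / 2)⟫| =
      ENNReal.ofReal ⟪nuLevel u x, dir (ψ + Real.pi / 2)⟫ +
        ENNReal.ofReal ⟪nuLevel u x, dir (ψ + Real.pi + Real.pi / 2)⟫ := fun x => by
    rw [add_right_comm, dir_add_pi, inner_neg_right]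
    rcases le_total 0 ⟪nuLevel u x, dir (ψ + Real.pi / 2)⟫ with h | h
    · simp [abs_of_nonneg h, ENNReal.ofReal_of_nonpos (neg_nonpos.2 h)]
    · simp [abs_of_nonpos h, ENNReal.ofReal_of_nonpos h]
  simp only [hneg]
  rw [lintegral_add_left (measurable_nuLevel.inner measurable_const).ennreal_ofReal,
    hu.lintegral_inner_nuLevel ht hne, hu.lintegral_inner_nuLevel ht hne, volume_shadow_add_pi,
    two_mul]

theorem superLevel_nonempty_of_gradient_ne_zero (hu : IsConcaveBump Ω u) (ht : 0 < t) {x : E2}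
    (hx : x ∈ levelSet Ω u t) (hgrad : gradient u x ≠ 0) : (superLevel Ω u t).Nonempty := by
  by_contra! hempty
  have hmax : IsLocalMax u x := by
    filter_upwards [hu.isOpen.mem_nhds (hu.levelSet_subset ht hx)] with y hy
    exact not_lt.1 fun h => eq_empty_iff_forall_notMem.1 hempty y ⟨hy, hx.2 ▸ h⟩
  exact hgrad (by rw [gradient, hmax.fderiv_eq_zero, map_zero])

theorem closedBall_subset_superLevel (hu : IsConcaveBump Ω u) {L : ℝ≥0}
    (hL : LipschitzOnWith L u (closure Ω)) {a b δ : ℝ} (ha : 0 < a) (hδ : L * δ ≤ b - a) {x : E2}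
    (hx : x ∈ superLevel Ω u b) : Metric.closedBall x δ ⊆ superLevel Ω u a := fun y hy => by
  have hδ0 : 0 ≤ δ := dist_nonneg.trans hy
  by_contra hya
  have hab : a ≤ b := by linarith [mul_nonneg L.coe_nonneg hδ0]
  obtain ⟨z, hz, hfrontier⟩ := exists_mem_inter_frontier (convex_closedBall x δ).isPreconnected
    (isOpen_superLevel hu.isOpen (hu.contDiffOn.continuousOn.mono subset_closure))
    (Metric.mem_closedBall_self hδ0) ⟨hx.1, hab.trans_lt hx.2⟩ hy hya
  have hzlevel := hu.frontier_superLevel_subset ha hfrontier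
  have hdist : u x - u z ≤ L * δ := calc
    u x - u z ≤ dist (u x) (u z) := le_abs_self _
    _ ≤ L * dist x z := hL.dist_le_mul x (subset_closure hx.1) z hzlevel.1
    _ ≤ L * δ := by
      gcongr
      exact Metric.mem_closedBall'.1 hz
  linarith [hx.2, hzlevel.2]

end IsConcaveBump

end ConcaveBump

section GradientBound

variable {Ω : Set E2} {u : E2 → ℝ}

/-- The constant `max_{Ω̄} |∇u|`; at a boundary point where `u` is not differentiable as a function
on the plane, `gradient u` is `0`. -/
def supGradientNorm (Ω : Set E2) (u : E2 → ℝ) : ℝ := sSup ((fun x => ‖gradient u x‖) '' closure Ω)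

theorem supGradientNorm_nonneg : 0 ≤ supGradientNorm Ω u :=
  Real.sSup_nonneg (forall_mem_image.2 fun _ _ => norm_nonneg _)

theorem norm_gradient (x : E2) : ‖gradient u x‖ = ‖fderiv ℝ u x‖ :=
  (InnerProductSpace.toDual ℝ E2).symm.norm_map _

namespace IsConcaveBump

theorem norm_gradient_le (hu : IsConcaveBump Ω u) {x : E2} (hx : x ∈ Ω) :
    ‖gradient u x‖ ≤ supGradientNorm Ω u := by
  have hunique : UniqueDiffOn ℝ (closure Ω) := uniqueDiffOn_convex hu.concaveOn.1.closure
    ⟨x, interior_maximal subset_closure hu.isOpen hx⟩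
  obtain ⟨B, hB⟩ := hu.isBounded.isCompact_closure.bddAbove_image
    (hu.contDiffOn.continuousOn_fderivWithin hunique le_rfl).norm
  refine le_csSup ⟨B, ?_⟩ (mem_image_of_mem _ (subset_closure hx))
  rintro _ ⟨y, hy, rfl⟩
  have hBy : ‖fderivWithin ℝ u (closure Ω) y‖ ≤ B := hB (mem_image_of_mem _ hy)
  simp only [norm_gradient]
  by_cases hd : DifferentiableAt ℝ u y
  · rwa [hd.fderivWithin (hunique y hy)] at hBy
  · rw [fderiv_zero_of_not_differentiableAt hd, norm_zero]
    exact (norm_nonneg _).trans hBy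

theorem lipschitzOnWith (hu : IsConcaveBump Ω u) :
    LipschitzOnWith (supGradientNorm Ω u).toNNReal u (closure Ω) := by
  refine LipschitzOnWith.closure hu.contDiffOn.continuousOn
    (hu.concaveOn.1.lipschitzOnWith_of_nnnorm_fderiv_le (fun x hx => hu.differentiableAt hx)
      fun x hx => ?_)
  rw [← norm_toNNReal, ← norm_gradient]
  exact Real.toNNReal_mono (hu.norm_gradient_le hx)

end IsConcaveBump

end GradientBound

section AnisotropicPerimeter

variable {p : Seminorm ℝ E2} {Ω : Set E2} {u : E2 → ℝ} {t α β : ℝ}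

theorem nonneg_of_forall_le_mul_norm (hβ : ∀ ξ, p ξ ≤ β * ‖ξ‖) : 0 ≤ β := by
  simpa [norm_dir] using! (apply_nonneg p (dir 0)).trans (hβ (dir 0))

theorem lambdaH_nonneg : 0 ≤ lambdaH p Ω u t := integral_nonneg fun _ => apply_nonneg p _

theorem exists_gradient_ne_zero_of_lambdaH_pos (h : 0 < lambdaH p Ω u t) :
    ∃ x ∈ levelSet Ω u t, gradient u x ≠ 0 := by
  by_contra! hzero
  exact h.ne' (setIntegral_eq_zero_of_forall_eq_zero fun x hx => by simp [nuLevel, hzero x hx])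

namespace IsConcaveBump

theorem integrableOn_seminorm_nuLevel (hu : IsConcaveBump Ω u) (ht : 0 < t)
    (hne : (superLevel Ω u t).Nonempty) :
    IntegrableOn (fun x => p (nuLevel u x)) (levelSet Ω u t) μH[1] := by
  have hcompact := isCompact_levelSet (t := t) hu.isBounded hu.contDiffOn.continuousOn
  have hcont : ContinuousOn (nuLevel u) (levelSet Ω u t) := fun x hx =>
    (continuousAt_nuLevel (hu.contDiffAt (hu.levelSet_subset ht hx))
      (hu.gradient_ne_zero ht hne hx)).continuousWithinAt
  exact (p.convexOn.locallyLipschitz.continuous.comp_continuousOn hcont)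
    |>.integrableOn_of_subset_isCompact hcompact hcompact.measurableSet Subset.rfl
      (hu.hausdorffMeasure_levelSet_lt_top ht hne).ne

theorem ofReal_lambdaH (hp : ContDiffOn ℝ 2 p {0}ᶜ) (hu : IsConcaveBump Ω u) (ht : 0 < t)
    (hne : (superLevel Ω u t).Nonempty) :
    ENNReal.ofReal (lambdaH p Ω u t) =
      2 * ∫⁻ ψ, volume (shadow (superLevel Ω u t) ψ) ∂zonoidMeasure p := by
  have : IsFiniteMeasure (μH[1].restrict (levelSet Ω u t)) :=
    isFiniteMeasure_restrict.2 (hu.hausdorffMeasure_levelSet_lt_top ht hne).ne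
  have : IsFiniteMeasure (zonoidMeasure p) :=
    ⟨(zonoidMeasure_univ hp).trans_lt ENNReal.ofReal_lt_top⟩
  have hmeas : Measurable fun q : E2 × ℝ =>
      ENNReal.ofReal |⟪nuLevel u q.1, dir (q.2 + Real.pi / 2)⟫| := by
    have := measurable_nuLevel (u := u)
    have := continuous_dir.measurable
    fun_prop
  calc ENNReal.ofReal (lambdaH p Ω u t)
      = ∫⁻ x in levelSet Ω u t, ENNReal.ofReal (p (nuLevel u x)) ∂μH[1] :=
        ofReal_integral_eq_lintegral_ofReal (hu.integrableOn_seminorm_nuLevel ht hne)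
          (.of_forall fun _ => apply_nonneg p _)
    _ = ∫⁻ ψ, ∫⁻ x in levelSet Ω u t,
          ENNReal.ofReal |⟪nuLevel u x, dir (ψ + Real.pi / 2)⟫| ∂μH[1] ∂zonoidMeasure p := by
        simp only [← lintegral_abs_inner_zonoidMeasure hp]
        exact lintegral_lintegral_swap hmeas.aemeasurable
    _ = 2 * ∫⁻ ψ, volume (shadow (superLevel Ω u t) ψ) ∂zonoidMeasure p := by
        simp only [hu.lintegral_abs_inner_nuLevel ht hne]
        exact lintegral_const_mul' _ _ ENNReal.ofNat_ne_top

theorem lambdaH_add_le (hp : ContDiffOn ℝ 2 p {0}ᶜ) (hu : IsConcaveBump Ω u) {a b δ : ℝ}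
    (ha : 0 < a) (hb : 0 < b) (hδ : 0 ≤ δ) (hne : (superLevel Ω u b).Nonempty)
    (hball : ∀ x ∈ superLevel Ω u b, Metric.closedBall x δ ⊆ superLevel Ω u a) :
    lambdaH p Ω u b + δ * ∫ θ in -Real.pi..Real.pi, angularSupport p θ ≤ lambdaH p Ω u a := by
  set I := ∫ θ in -Real.pi..Real.pi, angularSupport p θ
  have hI : 0 ≤ I := intervalIntegral.integral_nonneg (by linarith [Real.pi_pos])
    fun θ _ => apply_nonneg p _
  have hne' : (superLevel Ω u a).Nonempty :=
    hne.mono fun x hx => hball x hx (Metric.mem_closedBall_self hδ)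
  have huniv : zonoidMeasure p univ = ENNReal.ofReal (1 / 4 * I) := zonoidMeasure_univ hp
  have hmass : ENNReal.ofReal (δ * I) = 2 * (ENNReal.ofReal (2 * δ) * zonoidMeasure p univ) := by
    rw [huniv, ← ENNReal.ofReal_mul (by positivity), ← ENNReal.ofReal_ofNat 2,
      ← ENNReal.ofReal_mul zero_le_two]
    ring_nf
  rw [← ENNReal.ofReal_le_ofReal_iff lambdaH_nonneg,
    ENNReal.ofReal_add lambdaH_nonneg (mul_nonneg hδ hI), hu.ofReal_lambdaH hp ha hne',
    hu.ofReal_lambdaH hp hb hne, hmass, ← mul_add, ← lintegral_const,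
    ← lintegral_add_right _ measurable_const]
  gcongr with ψ
  exact (volume_add_ofReal_le_volume_add_Icc (hne.image _) hδ).trans
    (measure_mono (shadow_add_Icc_subset hball ψ))

theorem sub_le_mul_lambdaH_sub (hα : 0 < α) (hαp : ∀ ξ, α * ‖ξ‖ ≤ p ξ)
    (hp : ContDiffOn ℝ 2 p {0}ᶜ) (hβ : ∀ ξ, p ξ ≤ β * ‖ξ‖) (hu : IsConcaveBump Ω u) {a b : ℝ}
    (ha : 0 < a) (hab : a < b) (hpos : 0 < lambdaH p Ω u b) :
    b - a ≤ β * supGradientNorm Ω u / (2 * kappa p) * (lambdaH p Ω u a - lambdaH p Ω u b) := by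
  have hb : 0 < b := ha.trans hab
  obtain ⟨x, hx, hgrad⟩ := exists_gradient_ne_zero_of_lambdaH_pos hpos
  have hM : 0 < supGradientNorm Ω u :=
    (norm_pos_iff.2 hgrad).trans_le (hu.norm_gradient_le (hu.levelSet_subset hb hx))
  set M := supGradientNorm Ω u
  set I := ∫ θ in -Real.pi..Real.pi, angularSupport p θ
  have hβ0 := nonneg_of_forall_le_mul_norm hβ
  have hmono : lambdaH p Ω u b + (b - a) / M * I ≤ lambdaH p Ω u a :=
    hu.lambdaH_add_le hp ha hb (div_nonneg (by linarith) hM.le)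
      (hu.superLevel_nonempty_of_gradient_ne_zero hb hx hgrad) fun y =>
        hu.closedBall_subset_superLevel hu.lipschitzOnWith ha
          (by rw [Real.coe_toNNReal _ hM.le, mul_div_cancel₀ _ hM.ne'])
  have hI : (b - a) * I ≤ M * (lambdaH p Ω u a - lambdaH p Ω u b) := by
    rw [← div_le_iff₀' hM, mul_div_right_comm]
    linarith
  rw [div_mul_eq_mul_div, le_div_iff₀ (mul_pos two_pos (kappa_pos hα hαp))]
  calc (b - a) * (2 * kappa p) ≤ (b - a) * (β * I) :=
        mul_le_mul_of_nonneg_left (two_mul_kappa_le hα hαp hβ) (by linarith)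
    _ = β * ((b - a) * I) := by ring
    _ ≤ β * (M * (lambdaH p Ω u a - lambdaH p Ω u b)) := by gcongr
    _ = β * M * (lambdaH p Ω u a - lambdaH p Ω u b) := by ring

end IsConcaveBump

end AnisotropicPerimeter

/-- An anisotropy, being even and convex, is a seminorm. -/
def IsAnisoNorm.seminorm {H : E2 → ℝ} (hH : IsAnisoNorm H) : Seminorm ℝ E2 :=
  Seminorm.of H (fun x y => by
    have hmid := hH.convex.2 (mem_univ x) (mem_univ y) one_half_pos.le one_half_pos.le
      (add_halves 1)
    have hscale := hH.homog 2 ((1 / 2 : ℝ) • x + (1 / 2 : ℝ) • y)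
    rw [smul_add, smul_smul, smul_smul, mul_one_div_cancel two_ne_zero, one_smul, one_smul,
      abs_two] at hscale
    simp only [smul_eq_mul] at hmid
    linarith) hH.homog

theorem diamondRe_lipschitz_general {p : Seminorm ℝ E2} {α β : ℝ} (hα : 0 < α)
    (hαp : ∀ ξ, α * ‖ξ‖ ≤ p ξ) (hp : ContDiffOn ℝ 2 p {0}ᶜ) (hβ : ∀ ξ, p ξ ≤ β * ‖ξ‖)
    {Ω : Set E2} {u : E2 → ℝ} (hu : IsConcaveBump Ω u) :
    AntitoneOn (diamondRe p Ω u) (Ioc 0 (PerH p Ω u)) ∧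
      LipschitzOnWith
        (Real.toNNReal (β * sSup ((fun x => ‖gradient u x‖) '' closure Ω) / (2 * kappa p)))
        (diamondRe p Ω u) (Ioc 0 (PerH p Ω u)) := by
  have hβ0 := nonneg_of_forall_le_mul_norm hβ
  have hC : 0 ≤ β * supGradientNorm Ω u / (2 * kappa p) :=
    div_nonneg (mul_nonneg hβ0 supGradientNorm_nonneg) (mul_pos two_pos (kappa_pos hα hαp)).le
  have hdrop : ∀ a b, 0 < a → a < b → 0 < lambdaH p Ω u b →
      b - a ≤ (β * supGradientNorm Ω u / (2 * kappa p)).toNNReal *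
        (lambdaH p Ω u a - lambdaH p Ω u b) := fun a b ha hab hb =>
    (Real.coe_toNNReal _ hC).symm ▸ hu.sub_le_mul_lambdaH_sub hα hαp hp hβ ha hab hb
  exact ⟨antitoneOn_genInverse hdrop, lipschitzOnWith_genInverse hdrop⟩

/-- for `u ∈ Φ₀(Ω) ∩ C²(E_u)` on a bounded convex open `Ω` with `C²`
boundary, the rearrangement `u^♦` is `C^{0,1}` on `(0, P_H(Ω)]`: it is decreasing there and
Lipschitz with constant (i.e. bound `C` on `-(u^♦)'`) `C = β · max_{Ω̄}|∇u| / (2κ)`,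
where `β` is any constant with `H(ξ) ≤ β|ξ|`. -/
theorem diamondRe_lipschitz
    (H : E2 → ℝ) (hH : IsAnisoNorm H)
    (Ω : Set E2) (hΩo : IsOpen Ω) (hΩb : Bornology.IsBounded Ω) (hΩc : Convex ℝ Ω)
    (hΩbd : HasC2Boundary Ω)
    (u : E2 → ℝ) (hu : MemPhi0 Ω u) (hu2 : ContDiffOn ℝ 2 u (Eu Ω u))
    (β : ℝ) (hβ : ∀ ξ, H ξ ≤ β * ‖ξ‖) :
    AntitoneOn (diamondRe H Ω u) (Ioc 0 (PerH H Ω u)) ∧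
    LipschitzOnWith
      (Real.toNNReal (β * sSup ((fun x => ‖gradient u x‖) '' closure Ω) / (2 * kappa H)))
      (diamondRe H Ω u) (Ioc 0 (PerH H Ω u)) := by
  obtain ⟨α, hα, hαH⟩ := hH.coercive
  exact diamondRe_lipschitz_general (p := hH.seminorm) hα hαH hH.smooth hβ
    ⟨hΩo, hΩb, hu.c1, hu.bzero, hu.concave⟩
end
end
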